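/- arXiv:2404.14888 — 5 statements merged into one kernel-verified Lean document; each statement's English description precedes it below -/
import Mathlib

section
/- Let E be a countable set, P a stochastic matrix on E that is irreducible and positive recurrent with (unique) invariant probability distribution π satisfying π(i) > 0 for all i, and suppose λ(P) := sup{ ⟨Ph,h⟩_π : h : E → ℝ, ‖h‖_π = 1, π(h) = 0 } < 1. Then for every function g : E → ℝ with a ≤ g(i) ≤ b for all i (a < b), every integer n ≥ 1 and every ε > 0, the Markov chain (X_k) with transition matrix P started from π satisfies ℙ_π( (1/n) ∑_{k=0}^{n-1} g(X_k) − π(g) ≥ ε ) ≤ exp( − ((1 − max{λ(P),0})/(1 + max{λ(P),0})) · 2nε²/(b−a)² ). -/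
open Filter MeasureTheory

/-- The `m`-step transition matrix of a transition kernel `P` on a countable state space. -/
noncomputable def nStep {E : Type*} [DecidableEq E] (P : E → E → ℝ) : ℕ → E → E → ℝ
  | 0 => fun i j => if i = j then 1 else 0
  | m + 1 => fun i j => ∑' k, P i k * nStep P m k j

/-!
Let `x` take values in `[A, B]` with `π(x) = 0`, and let `λ(P) ≤ l` with `0 ≤ l < 1`. The spectral
gap says that `⟨P u, u⟩_π ≤ l ‖u‖² + (1 - l) π(u)²`, so the exponentially tilted kernel
`P(i, j) e^{x(j)}` is dominated in the sense of quadratic forms by the tilted León–Perron kernel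
`l I + (1 - l) 1 ⊗ π`. By Cauchy–Schwarz the latter is bounded by `e^s` as soon as
`∑ π(i) / (e^{s - x(i)} - l) ≤ 1 / (1 - l)`, and by convexity this only needs to be checked for
the distribution of mean zero on `{A, B}`, where `s = (1 + l) / (1 - l) * (B - A)² / 8` works.

Since `P` is not assumed reversible, a bound on the quadratic form of a kernel does not pass to its
powers through the spectral theorem. For nonnegative kernels it still does: apply it to the vector
of the `ℓ²` norms of the orbit of `z` and use Cauchy–Schwarz with a cyclic shift of that orbit.
Applied to the tilted kernel restricted to finite sets of states this bounds the moment generating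
function of the additive functional, which is therefore sub-Gaussian.
-/

section RealInequalities

open Real (exp cosh sinh)

theorem sinh_lt_mul_cosh {s : ℝ} (hs : 0 < s) : sinh s < s * cosh s := by
  obtain ⟨ξ, ⟨hξ0, hξs⟩, hξ⟩ := exists_hasDerivAt_eq_slope sinh cosh hs
    Real.continuous_sinh.continuousOn fun x _ => Real.hasDerivAt_sinh x
  rw [Real.sinh_zero, sub_zero, sub_zero, eq_div_iff hs.ne'] at hξ
  have hcosh : cosh ξ < cosh s := by
    rwa [Real.cosh_lt_cosh, abs_of_pos hξ0, abs_of_pos hs]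
  nlinarith

theorem cosh_sub_one_le {h : ℝ} (hh : 0 ≤ h) : cosh h - 1 ≤ h * sinh h / 2 := by
  obtain ⟨t, rfl⟩ : ∃ t, h = 2 * t := ⟨h / 2, (mul_div_cancel₀ h two_ne_zero).symm⟩
  have ht : 0 ≤ t := by linarith
  have hsinh : sinh t ≤ t * cosh t := by
    rcases ht.eq_or_lt with rfl | hpos
    · simp
    · exact (sinh_lt_mul_cosh hpos).le
  rw [Real.cosh_two_mul, Real.sinh_two_mul, Real.cosh_sq]
  nlinarith [Real.sinh_nonneg_iff.2 ht]

theorem nonneg_of_hasDerivAt_add_mul_nonneg {f f' : ℝ → ℝ} (k : ℝ)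
    (hf : ∀ x, HasDerivAt f (f' x) x) (hf' : ∀ x, 0 ≤ x → 0 ≤ f' x + k * f x)
    (h0 : 0 ≤ f 0) {x : ℝ} (hx : 0 ≤ x) : 0 ≤ f x := by
  have hderiv (y : ℝ) :
      HasDerivAt (fun y => exp (k * y) * f y) (exp (k * y) * (f' y + k * f y)) y := by
    refine (((hasDerivAt_id y).const_mul k).exp.mul (hf y)).congr_deriv ?_
    simp only [id]
    ring
  have hmono : MonotoneOn (fun y => exp (k * y) * f y) (Set.Ici 0) := by
    refine monotoneOn_of_hasDerivWithinAt_nonneg (convex_Ici 0)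
      (fun y _ => (hderiv y).continuousAt.continuousWithinAt)
      (fun y _ => (hderiv y).hasDerivWithinAt) fun y hy => ?_
    exact mul_nonneg (Real.exp_pos _).le (hf' y (interior_subset hy))
  have h := hmono Set.self_mem_Ici hx hx
  simp only [mul_zero, Real.exp_zero, one_mul] at h
  exact nonneg_of_mul_nonneg_right (h0.trans h) (Real.exp_pos _)

theorem nonneg_of_le_second_deriv {f f' f'' : ℝ → ℝ} (hf : ∀ x, HasDerivAt f (f' x) x)
    (hf' : ∀ x, HasDerivAt f' (f'' x) x) (hle : ∀ x, 0 ≤ x → f x ≤ f'' x)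
    (h0 : 0 ≤ f 0) (h1 : 0 ≤ f' 0 + f 0) {x : ℝ} (hx : 0 ≤ x) : 0 ≤ f x := by
  refine nonneg_of_hasDerivAt_add_mul_nonneg 1 hf (fun y hy => ?_) h0 hx
  have h : 0 ≤ f' y + f y :=
    nonneg_of_hasDerivAt_add_mul_nonneg (f := fun z => f' z + f z) (-1)
      (fun z => (hf' z).add (hf z)) (fun z hz => by linarith [hle z hz]) h1 hy
  linarith

theorem cosh_sub_mul_sinh_le_exp (m : ℝ) {h : ℝ} (hh : 0 ≤ h) :
    cosh h - m * sinh h ≤ exp (h ^ 2 / 2 - m * h) := by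
  let e (x : ℝ) : ℝ := exp (x ^ 2 / 2 - m * x)
  have he (x : ℝ) : HasDerivAt e (e x * (x - m)) x := by
    refine (((hasDerivAt_pow 2 x).div_const 2).sub
      ((hasDerivAt_id x).const_mul m)).exp.congr_deriv ?_
    simp [e]
  have hdiff (x : ℝ) : HasDerivAt (fun x => e x - (cosh x - m * sinh x))
      (e x * (x - m) - (sinh x - m * cosh x)) x :=
    (he x).sub ((Real.hasDerivAt_cosh x).sub ((Real.hasDerivAt_sinh x).const_mul m))
  have hdiff' (x : ℝ) : HasDerivAt (fun x => e x * (x - m) - (sinh x - m * cosh x))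
      (e x * (x - m) * (x - m) + e x * 1 - (cosh x - m * sinh x)) x :=
    ((he x).mul ((hasDerivAt_id x).sub_const m)).sub
      ((Real.hasDerivAt_sinh x).sub ((Real.hasDerivAt_cosh x).const_mul m))
  refine sub_nonneg.1 (nonneg_of_le_second_deriv hdiff hdiff' (fun x _ => ?_) ?_ ?_ hh)
  · nlinarith [mul_nonneg (Real.exp_pos (x ^ 2 / 2 - m * x)).le (sq_nonneg (x - m))]
  · simp [e]
  · simp [e]

theorem mul_cosh_sub_mul_sinh_le (m : ℝ) {c h : ℝ} (hc : 1 ≤ c) (hh : 0 ≤ h) :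
    c * cosh h - m * sinh h ≤
      c * cosh (c * h ^ 2 / 2 - m * h) + sinh (c * h ^ 2 / 2 - m * h) := by
  have hexp := cosh_sub_mul_sinh_le_exp (m - (c - 1) * h / 2) hh
  rw [show h ^ 2 / 2 - (m - (c - 1) * h / 2) * h = c * h ^ 2 / 2 - m * h by ring,
    ← Real.cosh_add_sinh] at hexp
  have hsinh := cosh_sub_one_le hh
  have hcosh := Real.one_le_cosh (c * h ^ 2 / 2 - m * h)
  nlinarith

theorem lt_exp_neg_two_mul {l : ℝ} (hl0 : 0 ≤ l) (hl1 : l < 1) :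
    l < exp (-2 * ((1 - l) / (1 + l))) := by
  set τ := (1 - l) / (1 + l) with hτ
  have hτ0 : 0 < τ := by have := sub_pos.2 hl1; positivity
  have hlτ : l * (1 + τ) = 1 - τ := by rw [hτ]; field_simp; ring
  have hsplit : exp (-2 * τ) * exp τ = exp (-τ) := by rw [← Real.exp_add]; ring_nf
  have hmul : (1 - τ) * exp τ < (1 + τ) * exp (-τ) := by
    rw [← Real.cosh_add_sinh, ← Real.cosh_sub_sinh]
    linarith [sinh_lt_mul_cosh hτ0]
  rw [← hlτ, ← hsplit] at hmul
  refine lt_of_mul_lt_mul_right (a := (1 + τ) * exp τ) ?_ (by positivity)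
  linarith

theorem lt_exp_mul_sq_sub {l : ℝ} (hl0 : 0 ≤ l) (hl1 : l < 1) (d : ℝ) :
    l < exp ((1 + l) / (1 - l) * (d ^ 2 / 8) - d) := by
  refine (lt_exp_neg_two_mul hl0 hl1).trans_le (Real.exp_le_exp.2 ?_)
  have h1l := sub_pos.2 hl1
  have hsq : (1 + l) / (1 - l) * (d ^ 2 / 8) - d - -2 * ((1 - l) / (1 + l)) =
      ((1 + l) * d - 4 * (1 - l)) ^ 2 / (8 * (1 - l) * (1 + l)) := by
    field_simp
    ring
  rw [← sub_nonneg, hsq]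
  positivity

theorem two_point_inv_exp_sub_le {l m y h : ℝ} (hl1 : l < 1) (hh : 0 ≤ h)
    (hpos : l < exp (y - h))
    (hcosh : (1 + l) * cosh h - (1 - l) * m * sinh h ≤ exp y + l * exp (-y)) :
    (1 + m) / 2 * (exp (y + h) - l)⁻¹ + (1 - m) / 2 * (exp (y - h) - l)⁻¹ ≤ (1 - l)⁻¹ := by
  have hpos' : l < exp (y + h) := hpos.trans_le (Real.exp_le_exp.2 (by linarith))
  have hu : 0 < exp (y + h) - l := sub_pos.2 hpos'
  have hv : 0 < exp (y - h) - l := sub_pos.2 hpos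
  have hadd : exp (y + h) = exp y * (cosh h + sinh h) := by
    rw [Real.cosh_add_sinh, Real.exp_add]
  have hsub : exp (y - h) = exp y * (cosh h - sinh h) := by
    rw [Real.cosh_sub_sinh, sub_eq_add_neg, Real.exp_add]
  have hmul : exp y * ((1 + l) * cosh h - (1 - l) * m * sinh h) ≤ exp y ^ 2 + l := by
    have := mul_le_mul_of_nonneg_left hcosh (Real.exp_pos y).le
    rw [mul_add, mul_left_comm _ l, Real.exp_neg, mul_inv_cancel₀ (Real.exp_pos y).ne'] at this
    linarith
  have hprod : (exp (y + h) - l) * (exp (y - h) - l) =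
      exp y ^ 2 - 2 * l * exp y * cosh h + l ^ 2 := by
    rw [hadd, hsub]
    linear_combination exp y ^ 2 * Real.cosh_sq_sub_sinh_sq h
  rw [show (1 + m) / 2 * (exp (y + h) - l)⁻¹ + (1 - m) / 2 * (exp (y - h) - l)⁻¹ =
      ((1 + m) / 2 * (exp (y - h) - l) + (1 - m) / 2 * (exp (y + h) - l)) /
        ((exp (y + h) - l) * (exp (y - h) - l)) by field_simp, ← one_div,
    div_le_div_iff₀ (mul_pos hu hv) (sub_pos.2 hl1), hprod, hadd, hsub]
  linarith

theorem convexOn_inv_exp_sub {l s B : ℝ} (hl0 : 0 ≤ l) (hB : l < exp (s - B)) :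
    ConvexOn ℝ (Set.Iic B) fun x => (exp (s - x) - l)⁻¹ := by
  have hpos {x : ℝ} (hx : x ≤ B) : 0 < exp (s - x) - l :=
    sub_pos.2 (hB.trans_le (Real.exp_le_exp.2 (by linarith)))
  -- `ψ = (exp (s - x) - l)⁻¹` solves the Riccati equation `ψ' = ψ + l ψ ^ 2` and is increasing.
  have hderiv {x : ℝ} (hx : x ≤ B) : HasDerivAt (fun x => (exp (s - x) - l)⁻¹)
      ((exp (s - x) - l)⁻¹ + l * (exp (s - x) - l)⁻¹ ^ 2) x := by
    refine (((((hasDerivAt_id x).const_sub s).exp).sub_const l).inv (hpos hx).ne').congr_deriv ?_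
    have := (hpos hx).ne'
    simp only [id]
    field_simp
    ring
  have hmono {x y : ℝ} (hxy : x ≤ y) (hy : y ≤ B) :
      (exp (s - x) - l)⁻¹ ≤ (exp (s - y) - l)⁻¹ :=
    inv_anti₀ (hpos hy) (sub_le_sub_right (Real.exp_le_exp.2 (by linarith)) l)
  refine MonotoneOn.convexOn_of_deriv (convex_Iic B)
    (fun x hx => (hderiv hx).continuousAt.continuousWithinAt)
    (fun x hx => (hderiv (Set.mem_Iic.1
      (interior_subset hx))).differentiableAt.differentiableWithinAt)
    fun x _ y hy hxy => ?_
  have hyB : y ≤ B := Set.mem_Iic.1 (interior_subset hy)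
  rw [(hderiv (hxy.trans hyB)).deriv, (hderiv hyB).deriv]
  have hinv := inv_nonneg.2 (hpos (hxy.trans hyB)).le
  have := hmono hxy hyB
  gcongr

end RealInequalities

section TwoPoint

open Real (exp)

variable {E : Type*} {π x : E → ℝ} {A B : ℝ}

theorem le_of_hasSum_mul {M : ℝ} (hπ0 : ∀ i, 0 ≤ π i) (hπ1 : HasSum π 1) (hx : ∀ i, A ≤ x i)
    (hM : HasSum (fun i => π i * x i) M) : A ≤ M := by
  simpa only [one_mul] using
    hasSum_le (fun i => mul_le_mul_of_nonneg_left (hx i) (hπ0 i)) (hπ1.mul_right A) hM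

theorem hasSum_mul_le {M : ℝ} (hπ0 : ∀ i, 0 ≤ π i) (hπ1 : HasSum π 1) (hx : ∀ i, x i ≤ B)
    (hM : HasSum (fun i => π i * x i) M) : M ≤ B := by
  simpa only [one_mul] using
    hasSum_le (fun i => mul_le_mul_of_nonneg_left (hx i) (hπ0 i)) hM (hπ1.mul_right B)

theorem sum_mul_comp_le_of_convexOn {φ : ℝ → ℝ} {M : ℝ} (hπ0 : ∀ i, 0 ≤ π i)
    (hπ1 : HasSum π 1) (hAB : A < B) (hx : ∀ i, x i ∈ Set.Icc A B)
    (hM : HasSum (fun i => π i * x i) M) (hφ : ConvexOn ℝ (Set.Icc A B) φ)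
    (hφ0 : ∀ y ∈ Set.Icc A B, 0 ≤ φ y) (F : Finset E) :
    ∑ i ∈ F, π i * φ (x i) ≤ (B - M) / (B - A) * φ A + (M - A) / (B - A) * φ B := by
  have hBA : 0 < B - A := sub_pos.2 hAB
  let chord (y : ℝ) : ℝ := (B - y) / (B - A) * φ A + (y - A) / (B - A) * φ B
  have hchord (i : E) : φ (x i) ≤ chord (x i) := by
    have h := hφ.2 (Set.left_mem_Icc.2 hAB.le) (Set.right_mem_Icc.2 hAB.le)
      (div_nonneg (sub_nonneg.2 (hx i).2) hBA.le) (div_nonneg (sub_nonneg.2 (hx i).1) hBA.le)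
      (by field_simp; ring)
    simp only [smul_eq_mul] at h
    rwa [show (B - x i) / (B - A) * A + (x i - A) / (B - A) * B = x i by field_simp; ring] at h
  have hchord_eq (y : ℝ) : chord y =
      (B * φ A - A * φ B) / (B - A) + y * ((φ B - φ A) / (B - A)) := by
    simp only [chord]
    ring
  have hsum : HasSum (fun i => π i * chord (x i)) (chord M) := by
    simpa only [hchord_eq, mul_add, ← mul_assoc, one_mul] using
      (hπ1.mul_right ((B * φ A - A * φ B) / (B - A))).add (hM.mul_right ((φ B - φ A) / (B - A)))
  calc ∑ i ∈ F, π i * φ (x i) ≤ ∑ i ∈ F, π i * chord (x i) :=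
        Finset.sum_le_sum fun i _ => mul_le_mul_of_nonneg_left (hchord i) (hπ0 i)
    _ ≤ chord M := sum_le_hasSum F
        (fun i _ => mul_nonneg (hπ0 i) ((hφ0 _ (hx i)).trans (hchord i))) hsum

theorem lt_exp_sub_of_le {l y : ℝ} (hl0 : 0 ≤ l) (hl1 : l < 1) (hA : A ≤ 0)
    (hy : y ≤ B) : l < exp ((1 + l) / (1 - l) * ((B - A) ^ 2 / 8) - y) :=
  (lt_exp_mul_sq_sub hl0 hl1 (B - A)).trans_le (Real.exp_le_exp.2 (by linarith))

theorem two_point_mean_zero_le {l : ℝ} (hl0 : 0 ≤ l) (hl1 : l < 1) (hAB : A < B) (hA : A ≤ 0) :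
    let s := (1 + l) / (1 - l) * ((B - A) ^ 2 / 8)
    (B - 0) / (B - A) * (exp (s - A) - l)⁻¹ + (0 - A) / (B - A) * (exp (s - B) - l)⁻¹ ≤
      (1 - l)⁻¹ := by
  intro s
  set c := (1 + l) / (1 - l) with hc
  set h := (B - A) / 2 with hh
  set m := (A + B) / (B - A) with hm
  have h1l : 0 < 1 - l := sub_pos.2 hl1
  have hBA : 0 < B - A := sub_pos.2 hAB
  have hc1 : 1 ≤ c := by rw [hc, one_le_div h1l]; linarith
  have hcl : (1 - l) * c = 1 + l := mul_div_cancel₀ _ h1l.ne'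
  have hmh : m * h = (A + B) / 2 := by rw [hm, hh]; field_simp
  set y := c * h ^ 2 / 2 - m * h with hy
  have hsA : s - A = y + h := by rw [hy, hmh, hh]; ring
  have hsB : s - B = y - h := by rw [hy, hmh, hh]; ring
  have hcosh : (1 + l) * Real.cosh h - (1 - l) * m * Real.sinh h ≤ exp y + l * exp (-y) := by
    have h0 := mul_le_mul_of_nonneg_left
      (mul_cosh_sub_mul_sinh_le m hc1 (h := h) (by positivity)) h1l.le
    rw [← hy, mul_sub, mul_add, ← mul_assoc, ← mul_assoc, ← mul_assoc, hcl] at h0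
    rw [← Real.cosh_add_sinh, ← Real.cosh_sub_sinh]
    linarith
  have hpos : l < exp (y - h) := hsB ▸ lt_exp_sub_of_le hl0 hl1 hA le_rfl
  have hweight : (B - 0) / (B - A) = (1 + m) / 2 ∧ (0 - A) / (B - A) = (1 - m) / 2 := by
    rw [hm]
    constructor <;> field_simp <;> ring
  rw [hsA, hsB, hweight.1, hweight.2]
  exact two_point_inv_exp_sub_le hl1 (by positivity) hpos hcosh

theorem sum_mul_inv_exp_sub_le {l : ℝ} (hl0 : 0 ≤ l) (hl1 : l < 1) (hπ0 : ∀ i, 0 ≤ π i)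
    (hπ1 : HasSum π 1) (hx : ∀ i, x i ∈ Set.Icc A B) (hx0 : HasSum (fun i => π i * x i) 0)
    (F : Finset E) :
    ∑ i ∈ F, π i * (exp ((1 + l) / (1 - l) * ((B - A) ^ 2 / 8) - x i) - l)⁻¹ ≤ (1 - l)⁻¹ := by
  have hA : A ≤ 0 := le_of_hasSum_mul hπ0 hπ1 (fun i => (hx i).1) hx0
  have hB : 0 ≤ B := hasSum_mul_le hπ0 hπ1 (fun i => (hx i).2) hx0
  rcases (hA.trans hB).eq_or_lt with rfl | hAB
  · have hx' (i : E) : x i = 0 := le_antisymm ((hx i).2.trans hA) (hB.trans (hx i).1)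
    simp only [hx', sub_self, ne_eq, OfNat.ofNat_ne_zero, not_false_eq_true, zero_pow, zero_div,
      mul_zero, Real.exp_zero, ← Finset.sum_mul]
    exact mul_le_of_le_one_left (inv_nonneg.2 (sub_pos.2 hl1).le)
      (sum_le_hasSum F (fun i _ => hπ0 i) hπ1)
  · exact (sum_mul_comp_le_of_convexOn hπ0 hπ1 hAB hx hx0
      ((convexOn_inv_exp_sub hl0 (lt_exp_sub_of_le hl0 hl1 hA le_rfl)).subset
        Set.Icc_subset_Iic_self (convex_Icc A B))
      (fun y hy => inv_nonneg.2 (sub_pos.2 (lt_exp_sub_of_le hl0 hl1 hA hy.2)).le) F).trans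
      (two_point_mean_zero_le hl0 hl1 hAB hA)

end TwoPoint

section MatrixPowers

open scoped Matrix

/-- The product of an initial weight `q` and transition weights `A` along a path `y`. For an
initial distribution and a transition matrix it is the probability of the path. -/
def pathWeight {ι : Type*} {n : ℕ} (q : ι → ℝ) (A : ι → ι → ℝ) (y : Fin (n + 1) → ι) : ℝ :=
  q (y 0) * ∏ k : Fin n, A (y k.castSucc) (y k.succ)

theorem pathWeight_nonneg {ι : Type*} {n : ℕ} {q : ι → ℝ} {A : ι → ι → ℝ} (hq : ∀ i, 0 ≤ q i)
    (hA : ∀ i j, 0 ≤ A i j) (y : Fin (n + 1) → ι) : 0 ≤ pathWeight q A y :=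
  mul_nonneg (hq _) (Finset.prod_nonneg fun _ _ => hA _ _)

theorem pathWeight_mul_exp_sum {ι : Type*} {n : ℕ} (q x : ι → ℝ) (A : ι → ι → ℝ)
    (y : Fin (n + 1) → ι) :
    pathWeight q A y * Real.exp (∑ k, x (y k)) =
      pathWeight (fun i => q i * Real.exp (x i)) (fun i j => A i j * Real.exp (x j)) y := by
  rw [pathWeight, pathWeight, Finset.prod_mul_distrib, Fin.sum_univ_succ, Real.exp_add,
    Real.exp_sum]
  ring

variable {ι : Type*} [Fintype ι]

theorem sum_perm_bilin_le {κ : Type*} [Fintype κ] {W : ι → ι → ℝ} {q : ι → ℝ}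
    (hW : ∀ i j, 0 ≤ W i j)
    (hform : ∀ z : ι → ℝ, (∀ i, 0 ≤ z i) → ∑ i, ∑ j, W i j * (z i * z j) ≤ ∑ i, q i * z i ^ 2)
    (σ : Equiv.Perm κ) (Y : κ → ι → ℝ) :
    ∑ k, ∑ i, ∑ j, W i j * (Y (σ k) i * Y k j) ≤ ∑ k, ∑ i, q i * Y k i ^ 2 := by
  let z (i : ι) : ℝ := √(∑ k, Y k i ^ 2)
  have hcauchy (i j : ι) : ∑ k, Y (σ k) i * Y k j ≤ z i * z j := by
    simpa only [Equiv.sum_comp σ fun k => Y k i ^ 2] using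
      Real.sum_mul_le_sqrt_mul_sqrt Finset.univ (fun k => Y (σ k) i) fun k => Y k j
  calc ∑ k, ∑ i, ∑ j, W i j * (Y (σ k) i * Y k j)
      = ∑ i, ∑ j, W i j * ∑ k, Y (σ k) i * Y k j := by
        simp only [Finset.mul_sum]
        rw [Finset.sum_comm]
        exact Finset.sum_congr rfl fun i _ => Finset.sum_comm
    _ ≤ ∑ i, ∑ j, W i j * (z i * z j) := Finset.sum_le_sum fun i _ => Finset.sum_le_sum fun j _ =>
        mul_le_mul_of_nonneg_left (hcauchy i j) (hW i j)
    _ ≤ ∑ i, q i * z i ^ 2 := hform z fun i => Real.sqrt_nonneg _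
    _ = ∑ k, ∑ i, q i * Y k i ^ 2 := by
        simp only [z, Real.sq_sqrt (Finset.sum_nonneg fun _ _ => sq_nonneg _), Finset.mul_sum]
        exact Finset.sum_comm

variable [DecidableEq ι] {q : ι → ℝ} {A : Matrix ι ι ℝ}

theorem sum_mul_pow_mulVec_le_of_contraction (hq : ∀ i, 0 ≤ q i) (hA : ∀ i j, 0 ≤ A i j)
    (hform : ∀ z : ι → ℝ, (∀ i, 0 ≤ z i) →
      ∑ i, ∑ j, q i * A i j * (z i * z j) ≤ ∑ i, q i * z i ^ 2)
    (n : ℕ) (z : ι → ℝ) :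
    ∑ i, q i * (z i * (A ^ n *ᵥ z) i) ≤ ∑ i, q i * z i ^ 2 := by
  cases n with
  | zero => simp only [pow_zero, Matrix.one_mulVec, sq, le_refl]
  | succ m =>
    -- Shifting the orbit `z, A z, …, A ^ m z` cyclically makes all terms but one cancel.
    let Y (k : Fin (m + 1)) : ι → ℝ := A ^ (k : ℕ) *ᵥ z
    have hY (k : Fin (m + 1)) (i : ι) :
        ∑ j, q i * A i j * (Y (finRotate (m + 1) k) i * Y k j) =
          q i * (Y (finRotate (m + 1) k) i * (A ^ (k + 1 : ℕ) *ᵥ z) i) := by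
      rw [pow_succ', ← Matrix.mulVec_mulVec, Matrix.mulVec, dotProduct, Finset.mul_sum,
        Finset.mul_sum]
      exact Finset.sum_congr rfl fun j _ => by ring
    have hcyclic := sum_perm_bilin_le (fun i j => mul_nonneg (hq i) (hA i j)) hform
      (finRotate (m + 1)) Y
    simp only [hY] at hcyclic
    rw [Fin.sum_univ_castSucc, Fin.sum_univ_succ (fun k => ∑ i, q i * Y k i ^ 2)] at hcyclic
    have hshift (k : Fin m) : Y (finRotate (m + 1) k.castSucc) = Y k.succ := by
      rw [finRotate_apply, Fin.coeSucc_eq_succ]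
    simp only [hshift, finRotate_last] at hcyclic
    simp only [Y, Fin.val_castSucc, Fin.val_succ, Fin.val_last, Fin.val_zero, pow_zero,
      Matrix.one_mulVec, ← sq] at hcyclic
    linarith

theorem sum_mul_pow_mulVec_le {r : ℝ} (hr : 0 < r) (hq : ∀ i, 0 ≤ q i) (hA : ∀ i j, 0 ≤ A i j)
    (hform : ∀ z : ι → ℝ, (∀ i, 0 ≤ z i) →
      ∑ i, ∑ j, q i * A i j * (z i * z j) ≤ r * ∑ i, q i * z i ^ 2)
    (n : ℕ) (z : ι → ℝ) :
    ∑ i, q i * (z i * (A ^ n *ᵥ z) i) ≤ r ^ n * ∑ i, q i * z i ^ 2 := by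
  have h := sum_mul_pow_mulVec_le_of_contraction (A := r⁻¹ • A) hq
    (fun i j => mul_nonneg (inv_nonneg.2 hr.le) (hA i j)) (fun y hy => ?_) n z
  · simp only [smul_pow, Matrix.smul_mulVec, Pi.smul_apply, smul_eq_mul, inv_pow,
      mul_left_comm _ (r ^ n)⁻¹, ← Finset.mul_sum] at h
    exact (inv_mul_le_iff₀ (pow_pos hr n)).1 h
  · simp only [Matrix.smul_apply, smul_eq_mul, mul_left_comm _ r⁻¹, mul_assoc r⁻¹, ← Finset.mul_sum]
    exact (inv_mul_le_iff₀ hr).2 (hform y hy)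

theorem sum_pathWeight_mul (A : Matrix ι ι ℝ) (v : ι → ℝ) (n : ℕ) (q : ι → ℝ) :
    ∑ y : Fin (n + 1) → ι, pathWeight q A y * v (y (Fin.last n)) =
      ∑ i, q i * (A ^ n *ᵥ v) i := by
  induction n generalizing q with
  | zero =>
    simp only [pathWeight, Finset.univ_eq_empty, Finset.prod_empty, mul_one, pow_zero,
      Matrix.one_mulVec]
    exact Fintype.sum_equiv (Equiv.funUnique (Fin 1) ι) _ _ fun y => rfl
  | succ n ih =>
    rw [← (Fin.consEquiv fun _ => ι).sum_comp, Fintype.sum_prod_type]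
    refine Finset.sum_congr rfl fun i _ => ?_
    rw [pow_succ', ← Matrix.mulVec_mulVec, Matrix.mulVec, dotProduct, ← ih, Finset.mul_sum]
    refine Finset.sum_congr rfl fun y _ => ?_
    simp only [pathWeight, Fin.prod_univ_succ, Fin.consEquiv, Equiv.coe_fn_mk, Fin.cons_zero,
      Fin.castSucc_zero, Fin.cons_succ, ← Fin.succ_castSucc, ← Fin.succ_last]
    ring

end MatrixPowers

section SpectralGap

/-- `π` is an invariant probability distribution of the stochastic matrix `P`. All series are
required to converge through `HasSum`, so no junk value of `tsum` can occur. -/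
structure IsInvariantDistribution {E : Type*} (π : E → ℝ) (P : E → E → ℝ) : Prop where
  nonneg : ∀ i, 0 ≤ π i
  hasSum_one : HasSum π 1
  transition_nonneg : ∀ i j, 0 ≤ P i j
  hasSum_row : ∀ i, HasSum (P i) 1
  hasSum_col : ∀ j, HasSum (fun i => π i * P i j) (π j)

/-- The quadratic form `⟨P h, h⟩_π` of a transition matrix `P` on `L²(π)`. -/
noncomputable def transitionForm {E : Type*} (π : E → ℝ) (P : E → E → ℝ) (h : E → ℝ) : ℝ :=
  ∑' i, π i * (∑' j, P i j * h j) * h i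

/-- The values `⟨P h, h⟩_π` over the functions `h` with `‖h‖_π = 1` and `π(h) = 0`. -/
def centredRayleighSet {E : Type*} (π : E → ℝ) (P : E → E → ℝ) : Set ℝ :=
  {c : ℝ | ∃ h : E → ℝ, √(∑' i, π i * h i ^ 2) = 1 ∧ ∑' i, π i * h i = 0 ∧
    c = transitionForm π P h}

/-- The spectral quantity `λ(P)`, the supremum of `⟨P h, h⟩_π` over `‖h‖_π = 1`, `π(h) = 0`.
It is the junk value `sSup ∅ = 0` when no such `h` exists. -/
noncomputable def rayleighSup {E : Type*} (π : E → ℝ) (P : E → E → ℝ) : ℝ :=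
  sSup (centredRayleighSet π P)

theorem hasSum_of_tsum_eq {α : Type*} {f : α → ℝ} {s : ℝ} (hs : s ≠ 0) (h : ∑' a, f a = s) :
    HasSum f s := by
  have hf : Summable f := by
    by_contra hcon
    exact hs (h.symm.trans (tsum_eq_zero_of_not_summable hcon))
  exact h ▸ hf.hasSum

theorem hasSum_prod_mul_fst {α β : Type*} {K : α → β → ℝ} {m f : α → ℝ} {s : ℝ}
    (hK : ∀ a b, 0 ≤ K a b) (hm : ∀ a, HasSum (K a) (m a))
    (hf : HasSum (fun a => m a * f a) s) :
    HasSum (fun p : α × β => K p.1 p.2 * f p.1) s := by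
  have hfiber (a : α) : HasSum (fun b => K a b * f a) (m a * f a) := (hm a).mul_right (f a)
  have hm0 (a : α) : 0 ≤ m a := (hm a).nonneg (hK a)
  have hsummable : Summable fun p : α × β => K p.1 p.2 * f p.1 := by
    refine .of_norm ((summable_prod_of_nonneg fun p => norm_nonneg _).2 ⟨fun a => ?_, ?_⟩)
    · exact (hfiber a).summable.norm
    · refine hf.summable.norm.congr fun a => ?_
      simp only [norm_mul, Real.norm_of_nonneg (hK a _), Real.norm_of_nonneg (hm0 a),
        tsum_mul_right, (hm a).tsum_eq]
  have h := hsummable.hasSum.prod_fiberwise hfiber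
  exact h.unique hf ▸ hsummable.hasSum

namespace IsInvariantDistribution

variable {E : Type*} {π : E → ℝ} {P : E → E → ℝ}

theorem of_tsum (hπ0 : ∀ i, 0 ≤ π i) (hπ1 : ∑' i, π i = 1) (hP0 : ∀ i j, 0 ≤ P i j)
    (hP1 : ∀ i, ∑' j, P i j = 1) (hinv : ∀ j, ∑' i, π i * P i j = π j) :
    IsInvariantDistribution π P := by
  have hπ : HasSum π 1 := hasSum_of_tsum_eq one_ne_zero hπ1
  have hP (i : E) : HasSum (P i) 1 := hasSum_of_tsum_eq one_ne_zero (hP1 i)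
  refine ⟨hπ0, hπ, hP0, hP, fun j => ?_⟩
  have hsummable : Summable fun i => π i * P i j :=
    .of_nonneg_of_le (fun i => mul_nonneg (hπ0 i) (hP0 i j))
      (fun i => mul_le_of_le_one_right (hπ0 i) (le_hasSum (hP i) j fun k _ => hP0 i k))
      hπ.summable
  exact hinv j ▸ hsummable.hasSum

variable (h : IsInvariantDistribution π P)

include h

theorem joint_nonneg (i j : E) : 0 ≤ π i * P i j :=
  mul_nonneg (h.nonneg i) (h.transition_nonneg i j)

theorem hasSum_joint_fst {f : E → ℝ} {s : ℝ} (hf : HasSum (fun i => π i * f i) s) :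
    HasSum (fun p : E × E => π p.1 * P p.1 p.2 * f p.1) s :=
  hasSum_prod_mul_fst (K := fun i j => π i * P i j) h.joint_nonneg
    (fun i => by simpa only [mul_one] using (h.hasSum_row i).mul_left (π i)) hf

theorem hasSum_joint_snd {f : E → ℝ} {s : ℝ} (hf : HasSum (fun i => π i * f i) s) :
    HasSum (fun p : E × E => π p.1 * P p.1 p.2 * f p.2) s :=
  (Equiv.prodComm E E).hasSum_iff.1
    (hasSum_prod_mul_fst (K := fun j i => π i * P i j) (fun j i => h.joint_nonneg i j)
      h.hasSum_col hf)

theorem summable_mul {u : E → ℝ} (hu : Summable fun i => π i * u i ^ 2) :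
    Summable fun i => π i * u i := by
  refine .of_norm_bounded (hu.add h.hasSum_one.summable) fun i => ?_
  rw [norm_mul, Real.norm_of_nonneg (h.nonneg i), Real.norm_eq_abs, ← mul_add_one, ← sq_abs]
  exact mul_le_mul_of_nonneg_left (by nlinarith [sq_nonneg (|u i| - 1)]) (h.nonneg i)

theorem summable_mul_of_mem_Icc {g : E → ℝ} {a b : ℝ} (hg : ∀ i, g i ∈ Set.Icc a b) :
    Summable fun i => π i * g i := by
  refine .of_norm_bounded (h.hasSum_one.summable.mul_right (max |a| |b|)) fun i => ?_
  rw [norm_mul, Real.norm_of_nonneg (h.nonneg i)]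
  exact mul_le_mul_of_nonneg_left (abs_le_max_abs_abs (hg i).1 (hg i).2) (h.nonneg i)

theorem hasSum_transitionForm {u : E → ℝ} (hu : Summable fun i => π i * u i ^ 2) :
    HasSum (fun p : E × E => π p.1 * P p.1 p.2 * (u p.1 * u p.2)) (transitionForm π P u) := by
  have hsummable : Summable fun p : E × E => π p.1 * P p.1 p.2 * (u p.1 * u p.2) := by
    refine .of_norm_bounded
      ((h.hasSum_joint_fst hu.hasSum).add (h.hasSum_joint_snd hu.hasSum)).summable fun p => ?_
    rw [norm_mul, Real.norm_of_nonneg (h.joint_nonneg _ _), ← mul_add, Real.norm_eq_abs]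
    refine mul_le_mul_of_nonneg_left (abs_le.2 ?_) (h.joint_nonneg _ _)
    constructor <;> nlinarith [sq_nonneg (u p.1 + u p.2), sq_nonneg (u p.1 - u p.2)]
  convert hsummable.hasSum using 1
  rw [hsummable.tsum_prod, transitionForm]
  refine tsum_congr fun i => ?_
  rw [← tsum_mul_left, ← tsum_mul_right]
  exact tsum_congr fun j => by ring

theorem transitionForm_le {u : E → ℝ} (hu : Summable fun i => π i * u i ^ 2) :
    transitionForm π P u ≤ ∑' i, π i * u i ^ 2 := by
  have hle := hasSum_le (fun p : E × E => ?_) ((h.hasSum_transitionForm hu).mul_left 2)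
    ((h.hasSum_joint_fst hu.hasSum).add (h.hasSum_joint_snd hu.hasSum))
  · linarith
  · nlinarith [mul_nonneg (h.joint_nonneg p.1 p.2) (sq_nonneg (u p.1 - u p.2))]

theorem bddAbove_centredRayleighSet : BddAbove (centredRayleighSet π P) := by
  refine ⟨1, ?_⟩
  rintro c ⟨f, hf1, -, rfl⟩
  rw [Real.sqrt_eq_one] at hf1
  exact (h.transitionForm_le (hasSum_of_tsum_eq one_ne_zero hf1).summable).trans_eq hf1

theorem transitionForm_le_of_mean_zero {u : E → ℝ} (hu : Summable fun i => π i * u i ^ 2)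
    (hu0 : ∑' i, π i * u i = 0) :
    transitionForm π P u ≤ rayleighSup π P * ∑' i, π i * u i ^ 2 := by
  set N := ∑' i, π i * u i ^ 2 with hN
  have hN0 : 0 ≤ N := tsum_nonneg fun i => mul_nonneg (h.nonneg i) (sq_nonneg _)
  rcases hN0.eq_or_lt with hzero | hpos
  · simpa only [← hN, ← hzero, mul_zero] using h.transitionForm_le hu
  · have hsqrt : (√N)⁻¹ ^ 2 = N⁻¹ := by rw [inv_pow, Real.sq_sqrt hN0]
    rw [← div_le_iff₀ hpos]
    refine le_csSup h.bddAbove_centredRayleighSet ⟨fun i => (√N)⁻¹ * u i, ?_, ?_, ?_⟩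
    · simp only [mul_pow, hsqrt, mul_left_comm _ N⁻¹, tsum_mul_left, ← hN,
        inv_mul_cancel₀ hpos.ne', Real.sqrt_one]
    · simp only [mul_left_comm _ (√N)⁻¹, tsum_mul_left, hu0, mul_zero]
    · have hscale (i : E) : π i * (∑' j, P i j * ((√N)⁻¹ * u j)) * ((√N)⁻¹ * u i) =
          N⁻¹ * (π i * (∑' j, P i j * u j) * u i) := by
        simp only [mul_left_comm _ (√N)⁻¹, tsum_mul_left]
        rw [← hsqrt]
        ring
      simp only [transitionForm, hscale, tsum_mul_left]
      exact div_eq_inv_mul _ _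

theorem transitionForm_le_of_rayleighSup_le {l : ℝ} (hl : rayleighSup π P ≤ l) {u : E → ℝ}
    (hu : Summable fun i => π i * u i ^ 2) :
    transitionForm π P u ≤ l * ∑' i, π i * u i ^ 2 + (1 - l) * (∑' i, π i * u i) ^ 2 := by
  set m := ∑' i, π i * u i
  have hmean : HasSum (fun i => π i * u i) m := (h.summable_mul hu).hasSum
  have hcentred : HasSum (fun i => π i * (u i - m)) 0 := by
    simpa only [mul_sub, one_mul, sub_self] using hmean.sub (h.hasSum_one.mul_right m)
  have hvariance : HasSum (fun i => π i * (u i - m) ^ 2) (∑' i, π i * u i ^ 2 - m ^ 2) := by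
    have hsum := (hu.hasSum.sub (hmean.mul_left m)).sub (hcentred.mul_left m)
    rw [mul_zero, sub_zero, ← sq m] at hsum
    exact hsum.congr_fun fun i => by ring
  have hform : HasSum (fun p : E × E => π p.1 * P p.1 p.2 * ((u p.1 - m) * (u p.2 - m)))
      (transitionForm π P u - m ^ 2) := by
    have hsum := ((h.hasSum_transitionForm hu).sub ((h.hasSum_joint_fst hmean).mul_left m)).sub
      ((h.hasSum_joint_snd hcentred).mul_left m)
    rw [mul_zero, sub_zero, ← sq m] at hsum
    exact hsum.congr_fun fun p => by ring
  have hform_eq : transitionForm π P (fun i => u i - m) = transitionForm π P u - m ^ 2 :=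
    (h.hasSum_transitionForm (u := fun i => u i - m) hvariance.summable).unique hform
  have hgap := h.transitionForm_le_of_mean_zero (u := fun i => u i - m)
    hvariance.summable hcentred.tsum_eq
  rw [hform_eq, hvariance.tsum_eq] at hgap
  have hvariance_nonneg :=
    hvariance.nonneg fun i => mul_nonneg (h.nonneg i) (sq_nonneg _)
  linarith [mul_le_mul_of_nonneg_right hl hvariance_nonneg]

theorem sum_joint_mul_le {l : ℝ} (hl : rayleighSup π P ≤ l) (F : Finset E) (u : F → ℝ) :
    ∑ i : F, ∑ j : F, π i * P i j * (u i * u j) ≤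
      l * ∑ i : F, π i * u i ^ 2 + (1 - l) * (∑ i : F, π i * u i) ^ 2 := by
  let v : E → ℝ := Function.extend (Subtype.val : F → E) u 0
  have hv (i : F) : v i = u i := Subtype.val_injective.extend_apply u 0 i
  have hv0 (i : E) (hi : i ∉ F) : v i = 0 :=
    Function.extend_apply' u (0 : E → ℝ) i fun ⟨j, hj⟩ => hi (hj ▸ j.2)
  have htsum {f : E → ℝ} (hf : ∀ i ∉ F, f i = 0) : ∑' i, f i = ∑ i : F, f i :=
    (tsum_eq_sum hf).trans (F.sum_coe_sort f).symm
  have hsq (i : E) (hi : i ∉ F) : π i * v i ^ 2 = 0 := by simp [hv0 i hi]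
  have hbound := h.transitionForm_le_of_rayleighSup_le hl
    (summable_of_ne_finset_zero (f := fun i => π i * v i ^ 2) hsq)
  rw [transitionForm, htsum hsq, htsum fun i hi => by rw [hv0 i hi, mul_zero],
    htsum fun i hi => by rw [hv0 i hi, mul_zero]] at hbound
  have hrow (i : E) : ∑' j, P i j * v j = ∑ j : F, P i j * u j := by
    simpa only [hv] using htsum (f := fun j => P i j * v j) fun j hj => by rw [hv0 j hj, mul_zero]
  simp only [hrow, hv] at hbound
  refine le_of_eq_of_le (Finset.sum_congr rfl fun i _ => ?_) hbound
  rw [Finset.mul_sum, Finset.sum_mul]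
  exact Finset.sum_congr rfl fun j _ => by ring

end IsInvariantDistribution

end SpectralGap

section PerturbedForm

open Real (exp)

variable {ι : Type*} [Fintype ι] {π x : ι → ℝ} {l s : ℝ}

theorem mul_sum_sq_add_le_exp_mul_sum (hl1 : l < 1) (hπ0 : ∀ i, 0 ≤ π i)
    (hpos : ∀ i, l < exp (s - x i)) (hsum : ∑ i, π i * (exp (s - x i) - l)⁻¹ ≤ (1 - l)⁻¹)
    (u : ι → ℝ) :
    l * ∑ i, π i * u i ^ 2 + (1 - l) * (∑ i, π i * u i) ^ 2 ≤
      exp s * ∑ i, π i * exp (-x i) * u i ^ 2 := by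
  have hd (i : ι) : 0 < exp (s - x i) - l := sub_pos.2 (hpos i)
  have hsq (i : ι) : 0 ≤ π i * (exp (s - x i) - l) * u i ^ 2 :=
    mul_nonneg (mul_nonneg (hπ0 i) (hd i).le) (sq_nonneg _)
  have hcauchy : (∑ i, π i * u i) ^ 2 ≤
      (∑ i, π i * (exp (s - x i) - l)⁻¹) * ∑ i, π i * (exp (s - x i) - l) * u i ^ 2 :=
    Finset.sum_sq_le_sum_mul_sum_of_sq_le_mul _
      (fun i _ => mul_nonneg (hπ0 i) (inv_nonneg.2 (hd i).le)) (fun i _ => hsq i)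
      fun i _ => Eq.le <| by rw [mul_pow, mul_assoc, mul_assoc, mul_left_comm (_⁻¹),
        inv_mul_cancel_left₀ (hd i).ne', sq (π i), mul_assoc]
  have hbound : (1 - l) * (∑ i, π i * u i) ^ 2 ≤ ∑ i, π i * (exp (s - x i) - l) * u i ^ 2 := by
    rw [← le_inv_mul_iff₀ (sub_pos.2 hl1)]
    exact hcauchy.trans (mul_le_mul_of_nonneg_right hsum (Finset.sum_nonneg fun i _ => hsq i))
  have hsplit : ∑ i, π i * (exp (s - x i) - l) * u i ^ 2 =
      exp s * ∑ i, π i * exp (-x i) * u i ^ 2 - l * ∑ i, π i * u i ^ 2 := by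
    rw [Finset.mul_sum, Finset.mul_sum, ← Finset.sum_sub_distrib]
    refine Finset.sum_congr rfl fun i _ => ?_
    rw [sub_eq_add_neg s, Real.exp_add]
    ring
  linarith

theorem sum_mul_exp_le (hl0 : 0 ≤ l) (hl1 : l < 1) (hπ0 : ∀ i, 0 ≤ π i) (hπ1 : ∑ i, π i ≤ 1)
    (hpos : ∀ i, l < exp (s - x i)) (hsum : ∑ i, π i * (exp (s - x i) - l)⁻¹ ≤ (1 - l)⁻¹) :
    ∑ i, π i * exp (x i) ≤ exp s := by
  set S := ∑ i, π i * exp (x i)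
  set Q := ∑ i, π i * exp (x i) ^ 2
  have hQ0 : 0 ≤ Q := Finset.sum_nonneg fun i _ => mul_nonneg (hπ0 i) (sq_nonneg _)
  have hSQ : S ^ 2 ≤ Q :=
    (Finset.sum_sq_le_sum_mul_sum_of_sq_le_mul _ (fun i _ => hπ0 i)
      (fun i _ => mul_nonneg (hπ0 i) (sq_nonneg _)) fun i _ => Eq.le (by ring)).trans
      (mul_le_of_le_one_left hQ0 hπ1)
  have hform : l * Q + (1 - l) * S ^ 2 ≤ exp s * S := by
    convert mul_sum_sq_add_le_exp_mul_sum hl1 hπ0 hpos hsum fun i => exp (x i) using 2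
    refine Finset.sum_congr rfl fun i _ => ?_
    rw [sq, mul_assoc, ← mul_assoc (exp (-x i)), ← Real.exp_add, neg_add_cancel, Real.exp_zero,
      one_mul]
  have hS : S * S ≤ exp s * S := by nlinarith [mul_le_mul_of_nonneg_left hSQ hl0]
  have hS0 : 0 ≤ S := Finset.sum_nonneg fun i _ => mul_nonneg (hπ0 i) (Real.exp_pos _).le
  rcases hS0.eq_or_lt with hzero | hS0
  · exact hzero.symm.trans_le (Real.exp_pos s).le
  · exact le_of_mul_le_mul_right hS hS0

end PerturbedForm

namespace IsInvariantDistribution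

variable {E : Type*} {π x : E → ℝ} {P : E → E → ℝ} {l : ℝ} (h : IsInvariantDistribution π P)

include h

theorem sum_joint_mul_exp_le {s : ℝ} (hl : rayleighSup π P ≤ l) (hl1 : l < 1) (F : Finset E)
    (hpos : ∀ i ∈ F, l < Real.exp (s - x i))
    (hsum : ∑ i ∈ F, π i * (Real.exp (s - x i) - l)⁻¹ ≤ (1 - l)⁻¹) (z : F → ℝ) :
    ∑ i : F, ∑ j : F, π i * Real.exp (x i) * (P i j * Real.exp (x j)) * (z i * z j) ≤
      Real.exp s * ∑ i : F, π i * Real.exp (x i) * z i ^ 2 := by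
  rw [← F.sum_coe_sort fun i => π i * (Real.exp (s - x i) - l)⁻¹] at hsum
  let u (i : F) : ℝ := Real.exp (x i) * z i
  calc ∑ i : F, ∑ j : F, π i * Real.exp (x i) * (P i j * Real.exp (x j)) * (z i * z j)
      = ∑ i : F, ∑ j : F, π i * P i j * (u i * u j) :=
        Finset.sum_congr rfl fun i _ => Finset.sum_congr rfl fun j _ => by simp only [u]; ring
    _ ≤ l * ∑ i : F, π i * u i ^ 2 + (1 - l) * (∑ i : F, π i * u i) ^ 2 :=
        h.sum_joint_mul_le hl F u
    _ ≤ Real.exp s * ∑ i : F, π i * Real.exp (-x i) * u i ^ 2 :=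
        mul_sum_sq_add_le_exp_mul_sum (π := fun i : F => π i) (x := fun i : F => x i) hl1
          (fun i => h.nonneg i) (fun i => hpos i i.2) hsum u
    _ = Real.exp s * ∑ i : F, π i * Real.exp (x i) * z i ^ 2 := by
        congr 1
        refine Finset.sum_congr rfl fun i _ => ?_
        simp only [u, Real.exp_neg]
        field_simp

theorem sum_pathWeight_mul_exp_le {A B : ℝ} (hl : rayleighSup π P ≤ l) (hl0 : 0 ≤ l)
    (hl1 : l < 1) (hx : ∀ i, x i ∈ Set.Icc A B) (hx0 : HasSum (fun i => π i * x i) 0) (n : ℕ)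
    (F : Finset E) :
    ∑ y : Fin (n + 1) → F, pathWeight π P (fun k => (y k : E)) * Real.exp (∑ k, x (y k)) ≤
      Real.exp ((1 + l) / (1 - l) * ((B - A) ^ 2 / 8)) ^ (n + 1) := by
  classical
  set s := (1 + l) / (1 - l) * ((B - A) ^ 2 / 8)
  let q (i : F) : ℝ := π i * Real.exp (x i)
  let K : Matrix F F ℝ := fun i j => P i j * Real.exp (x j)
  have hA : A ≤ 0 := le_of_hasSum_mul h.nonneg h.hasSum_one (fun i => (hx i).1) hx0
  have hpos (i : E) : l < Real.exp (s - x i) := lt_exp_sub_of_le hl0 hl1 hA (hx i).2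
  have hsum : ∑ i ∈ F, π i * (Real.exp (s - x i) - l)⁻¹ ≤ (1 - l)⁻¹ :=
    sum_mul_inv_exp_sub_le hl0 hl1 h.nonneg h.hasSum_one hx hx0 F
  have hmass : ∑ i : F, π i ≤ 1 :=
    (F.sum_coe_sort π).trans_le (sum_le_hasSum F (fun i _ => h.nonneg i) h.hasSum_one)
  calc ∑ y : Fin (n + 1) → F, pathWeight π P (fun k => (y k : E)) * Real.exp (∑ k, x (y k))
      = ∑ y : Fin (n + 1) → F, pathWeight q K y * (1 : F → ℝ) (y (Fin.last n)) :=
        Finset.sum_congr rfl fun y _ => by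
          rw [Pi.one_apply, mul_one, pathWeight_mul_exp_sum]
          rfl
    _ = ∑ i : F, q i * ((1 : F → ℝ) i * (K ^ n).mulVec 1 i) := by
        simpa only [Pi.one_apply, one_mul] using sum_pathWeight_mul K 1 n q
    _ ≤ Real.exp s ^ n * ∑ i : F, q i * (1 : F → ℝ) i ^ 2 :=
        sum_mul_pow_mulVec_le (q := q) (A := K) (Real.exp_pos s)
          (fun i => mul_nonneg (h.nonneg i) (Real.exp_pos _).le)
          (fun i j => mul_nonneg (h.transition_nonneg i j) (Real.exp_pos _).le)
          (fun z _ => h.sum_joint_mul_exp_le hl hl1 F (fun i _ => hpos i) hsum z) n 1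
    _ ≤ Real.exp s ^ (n + 1) := by
        simp only [Pi.one_apply, one_pow, mul_one, pow_succ (Real.exp s)]
        refine mul_le_mul_of_nonneg_left ?_ (by positivity)
        exact sum_mul_exp_le (π := fun i : F => π i) (x := fun i : F => x i) hl0 hl1
          (fun i => h.nonneg i) hmass (fun i => hpos i)
          (le_of_eq_of_le (F.sum_coe_sort fun i => π i * (Real.exp (s - x i) - l)⁻¹) hsum)

end IsInvariantDistribution

section TrajectoryLaw

open ProbabilityTheory
open scoped ENNReal NNReal

/-- `μ` is the law of the trajectories of the Markov chain with transition matrix `P` and initial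
distribution `π`, characterized by its values on cylinders. -/
def IsTrajectoryLaw {E : Type*} [MeasurableSpace E] (π : E → ℝ) (P : E → E → ℝ)
    (μ : Measure (ℕ → E)) : Prop :=
  ∀ (m : ℕ) (x : ℕ → E), μ {ω | ∀ k ≤ m, ω k = x k} =
    ENNReal.ofReal (π (x 0) * ∏ k ∈ Finset.range m, P (x k) (x (k + 1)))

theorem tsum_pi_le_of_forall_finset {E κ : Type*} [Fintype κ] [DecidableEq κ]
    {f : (κ → E) → ℝ≥0∞} {C : ℝ≥0∞} (hf : ∀ F : Finset E, ∑ y : κ → F, f (fun k => y k) ≤ C) :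
    ∑' y, f y ≤ C := by
  classical
  rw [ENNReal.tsum_eq_iSup_sum]
  refine iSup_le fun s => ?_
  let F : Finset E := s.biUnion fun y => Finset.univ.image y
  let incl (y : κ → F) (k : κ) : E := y k
  have hincl : Function.Injective incl := Subtype.val_injective.comp_left
  have hsub : s ⊆ Finset.univ.image incl := fun y hy => Finset.mem_image.2
    ⟨fun k => ⟨y k, Finset.mem_biUnion.2 ⟨y, hy, Finset.mem_image_of_mem y (Finset.mem_univ k)⟩⟩,
      Finset.mem_univ _, rfl⟩
  calc ∑ y ∈ s, f y ≤ ∑ y ∈ Finset.univ.image incl, f y := Finset.sum_le_sum_of_subset hsub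
    _ = ∑ y : κ → F, f (incl y) := Finset.sum_image hincl.injOn
    _ ≤ C := hf F

variable {E : Type*} [MeasurableSpace E] {π x g : E → ℝ} {P : E → E → ℝ} {μ : Measure (ℕ → E)}

theorem mul_sub_mem_uIcc {a b y : ℝ} (t c : ℝ) (hy : y ∈ Set.Icc a b) :
    t * (y - c) ∈ Set.uIcc (t * (a - c)) (t * (b - c)) := by
  rcases le_total 0 t with ht | ht
  · exact Set.mem_uIcc_of_le (mul_le_mul_of_nonneg_left (sub_le_sub_right hy.1 c) ht)
      (mul_le_mul_of_nonneg_left (sub_le_sub_right hy.2 c) ht)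
  · exact Set.mem_uIcc_of_ge (mul_le_mul_of_nonpos_left (sub_le_sub_right hy.2 c) ht)
      (mul_le_mul_of_nonpos_left (sub_le_sub_right hy.1 c) ht)

namespace IsTrajectoryLaw

theorem measure_cylinder (hμ : IsTrajectoryLaw π P μ) {m : ℕ} (y : Fin (m + 1) → E) :
    μ {ω | ∀ k : Fin (m + 1), ω k = y k} = ENNReal.ofReal (pathWeight π P y) := by
  let z (k : ℕ) : E := if hk : k < m + 1 then y ⟨k, hk⟩ else y 0
  have hz (k : Fin (m + 1)) : z k = y k := dif_pos k.isLt
  have hcylinder : {ω : ℕ → E | ∀ k : Fin (m + 1), ω k = y k} = {ω | ∀ k ≤ m, ω k = z k} := by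
    ext ω
    simp only [← hz, Set.mem_ofPred_eq, Fin.forall_iff, Nat.lt_succ_iff]
  rw [hcylinder, hμ m z, pathWeight, Finset.prod_range]
  exact congrArg ENNReal.ofReal (congrArg₂ _ (congrArg π (hz 0))
    (Finset.prod_congr rfl fun k _ => congrArg₂ P (hz k.castSucc) (hz k.succ)))

variable [Countable E] [MeasurableSingletonClass E]

theorem lintegral_eq_tsum (hμ : IsTrajectoryLaw π P μ) (m : ℕ)
    (f : (Fin (m + 1) → E) → ℝ≥0∞) :
    ∫⁻ ω, f (fun k => ω k) ∂μ = ∑' y, f y * ENNReal.ofReal (pathWeight π P y) := by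
  have hrestrict : Measurable fun (ω : ℕ → E) (k : Fin (m + 1)) => ω k :=
    measurable_pi_lambda _ fun k => measurable_pi_apply _
  rw [← lintegral_map (measurable_of_countable f) hrestrict, lintegral_countable']
  refine tsum_congr fun y => ?_
  rw [Measure.map_apply hrestrict (measurableSet_singleton y), ← hμ.measure_cylinder y]
  simp only [Set.preimage, Set.mem_singleton_iff, funext_iff]

theorem lintegral_exp_sum_le (hμ : IsTrajectoryLaw π P μ) (h : IsInvariantDistribution π P)
    {l A B : ℝ} (hl : rayleighSup π P ≤ l) (hl0 : 0 ≤ l) (hl1 : l < 1)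
    (hx : ∀ i, x i ∈ Set.Icc A B) (hx0 : HasSum (fun i => π i * x i) 0) (m : ℕ) :
    ∫⁻ ω, ENNReal.ofReal (Real.exp (∑ k : Fin (m + 1), x (ω k))) ∂μ ≤
      ENNReal.ofReal (Real.exp ((1 + l) / (1 - l) * ((B - A) ^ 2 / 8)) ^ (m + 1)) := by
  rw [hμ.lintegral_eq_tsum m fun y => ENNReal.ofReal (Real.exp (∑ k, x (y k)))]
  refine tsum_pi_le_of_forall_finset fun F => ?_
  have hweight (y : Fin (m + 1) → F) : 0 ≤ pathWeight π P fun k => (y k : E) :=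
    pathWeight_nonneg h.nonneg h.transition_nonneg _
  simp only [← ENNReal.ofReal_mul (Real.exp_pos _).le]
  rw [← ENNReal.ofReal_sum_of_nonneg fun y _ => mul_nonneg (Real.exp_pos _).le (hweight y)]
  simp only [mul_comm (Real.exp _)]
  exact ENNReal.ofReal_le_ofReal (h.sum_pathWeight_mul_exp_le hl hl0 hl1 hx hx0 m F)

theorem integral_exp_sum_le (hμ : IsTrajectoryLaw π P μ) (h : IsInvariantDistribution π P)
    {l A B : ℝ} (hl : rayleighSup π P ≤ l) (hl0 : 0 ≤ l) (hl1 : l < 1)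
    (hx : ∀ i, x i ∈ Set.Icc A B) (hx0 : HasSum (fun i => π i * x i) 0) {n : ℕ} (hn : 1 ≤ n) :
    Integrable (fun ω => Real.exp (∑ k ∈ Finset.range n, x (ω k))) μ ∧
      ∫ ω, Real.exp (∑ k ∈ Finset.range n, x (ω k)) ∂μ ≤
        Real.exp (n * ((1 + l) / (1 - l) * ((B - A) ^ 2 / 8))) := by
  obtain ⟨m, rfl⟩ := Nat.exists_eq_add_of_le' hn
  have hbound := hμ.lintegral_exp_sum_le h hl hl0 hl1 hx hx0 m
  simp only [Finset.sum_range, Real.exp_nat_mul]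
  have hmeas : Measurable fun ω : ℕ → E => Real.exp (∑ k : Fin (m + 1), x (ω k)) :=
    Real.measurable_exp.comp (Finset.measurable_fun_sum _ fun k _ =>
      (measurable_of_countable x).comp (measurable_pi_apply _))
  have hnonneg (ω : ℕ → E) : 0 ≤ Real.exp (∑ k : Fin (m + 1), x (ω k)) := (Real.exp_pos _).le
  constructor
  · refine ⟨hmeas.aestronglyMeasurable, ?_⟩
    rw [hasFiniteIntegral_iff_ofReal (.of_forall hnonneg)]
    exact hbound.trans_lt ENNReal.ofReal_lt_top
  · rw [integral_eq_lintegral_of_nonneg_ae (.of_forall hnonneg) hmeas.aestronglyMeasurable]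
    exact ENNReal.toReal_le_of_le_ofReal (by positivity) hbound

theorem hasSubgaussianMGF_sum (hμ : IsTrajectoryLaw π P μ) (h : IsInvariantDistribution π P)
    {l a b : ℝ} (hl : rayleighSup π P ≤ l) (hl0 : 0 ≤ l) (hl1 : l < 1)
    (hg : ∀ i, g i ∈ Set.Icc a b) {G : ℝ} (hG : HasSum (fun i => π i * g i) G) {n : ℕ}
    (hn : 1 ≤ n) :
    HasSubgaussianMGF (fun ω => ∑ k ∈ Finset.range n, (g (ω k) - G))
      (n * ((1 + l) / (1 - l) * ((b - a) ^ 2 / 4))).toNNReal μ := by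
  have hmgf (t : ℝ) := hμ.integral_exp_sum_le (x := fun i => t * (g i - G)) h hl hl0 hl1
    (fun i => mul_sub_mem_uIcc t G (hg i))
    (by simpa only [mul_left_comm t, mul_sub, one_mul, sub_self, mul_zero] using
      (hG.sub (h.hasSum_one.mul_right G)).mul_left t) hn
  simp only [← Finset.mul_sum] at hmgf
  refine ⟨fun t => (hmgf t).1, fun t => (hmgf t).2.trans_eq ?_⟩
  have hc : 0 ≤ (1 + l) / (1 - l) := div_nonneg (by linarith) (sub_pos.2 hl1).le
  rw [Real.coe_toNNReal _ (mul_nonneg n.cast_nonneg (mul_nonneg hc (by positivity))),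
    max_sub_min_eq_abs, sq_abs]
  ring_nf

end IsTrajectoryLaw

end TrajectoryLaw

theorem dtmc_hoeffding_general {E : Type*} [Countable E] [MeasurableSpace E]
    [MeasurableSingletonClass E] {π g : E → ℝ} {P : E → E → ℝ} {μ : Measure (ℕ → E)}
    (h : IsInvariantDistribution π P) (hgap : rayleighSup π P < 1) (hμ : IsTrajectoryLaw π P μ)
    {a b : ℝ} (hab : a < b) (hg : ∀ i, g i ∈ Set.Icc a b) {n : ℕ} (hn : 1 ≤ n) {ε : ℝ}
    (hε : 0 ≤ ε) :
    μ {ω | (n : ℝ)⁻¹ * ∑ k ∈ Finset.range n, g (ω k) - ∑' i, π i * g i ≥ ε} ≤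
      ENNReal.ofReal (Real.exp (-((1 - max (rayleighSup π P) 0) / (1 + max (rayleighSup π P) 0) *
        (2 * n * ε ^ 2 / (b - a) ^ 2)))) := by
  set l := max (rayleighSup π P) 0
  have hl0 : 0 ≤ l := le_max_right _ _
  have hl1 : 0 < 1 - l := sub_pos.2 (max_lt hgap one_pos)
  have hba : 0 < b - a := sub_pos.2 hab
  have hn0 : (0 : ℝ) < n := Nat.cast_pos.2 hn
  have hsub := hμ.hasSubgaussianMGF_sum h (le_max_left _ _) hl0 (sub_pos.1 hl1) hg
    (h.summable_mul_of_mem_Icc hg).hasSum hn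
  have hfinite : IsFiniteMeasure μ := by
    simpa [integrable_const_iff] using hsub.integrable_exp_mul 0
  have htail := hsub.measure_ge_le (mul_nonneg hn0.le hε)
  have hevent (ω : ℕ → E) :
      (n : ℝ)⁻¹ * ∑ k ∈ Finset.range n, g (ω k) - ∑' i, π i * g i ≥ ε ↔
        n * ε ≤ ∑ k ∈ Finset.range n, (g (ω k) - ∑' i, π i * g i) := by
    rw [Finset.sum_sub_distrib, Finset.sum_const, Finset.card_range, nsmul_eq_mul, ge_iff_le,
      ← mul_le_mul_iff_right₀ hn0, mul_sub, mul_inv_cancel_left₀ hn0.ne']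
  simp only [hevent]
  rw [← ofReal_measureReal]
  refine ENNReal.ofReal_le_ofReal (htail.trans_eq (congrArg Real.exp ?_))
  rw [Real.coe_toNNReal _ (by positivity)]
  field_simp
  ring

/-- Hoeffding's inequality for an irreducible positive recurrent discrete-time Markov chain
with invariant probability distribution `π` and `L²(π)`-spectral gap `1 - λ(P) > 0`. -/
theorem dtmc_hoeffding
    {E : Type*} [Countable E] [DecidableEq E] [MeasurableSpace E] [DiscreteMeasurableSpace E]
    (π : E → ℝ) (hπpos : ∀ i, 0 < π i) (hπ1 : ∑' i, π i = 1)
    (P : E → E → ℝ) (hPnn : ∀ i j, 0 ≤ P i j) (hPsumm : ∀ i, Summable (P i))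
    (hProw : ∀ i, ∑' j, P i j = 1)
    -- irreducibility (together with the invariant probability distribution `π` with
    -- `π i > 0`, this is equivalent to irreducibility plus positive recurrence)
    (hirr : ∀ i j, ∃ m, 0 < nStep P m i j)
    (hinv : ∀ j, ∑' i, π i * P i j = π j)
    -- the spectral quantity `λ(P) = sup { ⟨Ph,h⟩_π : ‖h‖_π = 1, π(h) = 0 }`
    (lamP : ℝ)
    (hlamP : lamP = sSup {c : ℝ | ∃ h : E → ℝ,
        Real.sqrt (∑' i, π i * h i ^ 2) = 1 ∧ (∑' i, π i * h i) = 0 ∧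
        c = ∑' i, π i * (∑' j, P i j * h j) * h i})
    (hgap : lamP < 1)
    -- `μ` is the trajectory law of the chain with transition matrix `P` started from `π`,
    -- characterized by its finite-dimensional (cylinder) distributions
    (μ : Measure (ℕ → E)) [IsProbabilityMeasure μ]
    (hμ : ∀ (m : ℕ) (x : ℕ → E),
      μ {ω | ∀ k ≤ m, ω k = x k} =
        ENNReal.ofReal (π (x 0) * ∏ k ∈ Finset.range m, P (x k) (x (k + 1))))
    (g : E → ℝ) (a b : ℝ) (hab : a < b) (hg : ∀ i, a ≤ g i ∧ g i ≤ b)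
    (n : ℕ) (hn : 1 ≤ n) (ε : ℝ) (hε : 0 < ε) :
    μ {ω | (n : ℝ)⁻¹ * ∑ k ∈ Finset.range n, g (ω k) - ∑' i, π i * g i ≥ ε} ≤
      ENNReal.ofReal (Real.exp
        (-((1 - max lamP 0) / (1 + max lamP 0) * (2 * n * ε ^ 2 / (b - a) ^ 2)))) := by
  subst hlamP
  exact dtmc_hoeffding_general
    (.of_tsum (fun i => (hπpos i).le) hπ1 hPnn hProw hinv) hgap hμ hab hg hn hε.le
end

section
/- Let E be a finite set, Q an irreducible Q-matrix on E with invariant probability distribution π, π(i) > 0 for all i. Fix t > 0 and ε > 0, and let g : E → ℝ satisfy a ≤ g(i) ≤ b for all i (a < b). For each integer k ≥ 1, let P^{t/k} := exp((t/k)Q) (matrix exponential) and let ℙ_π^{(k)} be the law of the Markov chain (X_i^{(k)})_{i≥0} with one-step transition matrix P^{t/k} and initial distribution π. Then limsup_{k→∞} ℙ_π^{(k)}( (1/k) ∑_{i=0}^{k-1} g(X_i^{(k)}) − π(g) ≥ ε ) ≤ exp( − λ(Q) t ε² / (b−a)² ). -/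
open Filter MeasureTheory Matrix

/-!
The semigroup `P = exp (δ Q)` contracts mean-zero functions of `L²(π)` by `ρ = e^{-λδ}`, so its
bilinear form is dominated by that of the Leon–Perron operator `(1 - ρ)Π + ρI`, with `Π` the
projection onto constants. The moment generating function of `∑_{i < k} x(X_i)` is a power of
`diag(eˣ) P` tested against `π`, and it is at most `rᵏ` as soon as
`(1 - ρ)(π f)² + ρ π(f²) ≤ r π(e^{-x} f²)` for all `f`. Replacing `e^{-x}` by `1 - x` turns this
into a one-variable convexity estimate: for mean-zero `x` of oscillation `c`, it holds once
`(r c)² < 4(1 - ρ)(r - 1)`. With `δ = t / k` and `c = δθ(b - a)` this permits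
`r ≈ exp (δ θ²(b - a)² / (4λ))`, and optimizing `θ` in the Chernoff bound gives the theorem.

Throughout, `⟨f, h⟩_π` is `π ⬝ᵥ (f * h)`, and `e^{-x}` is the inverse `w⁻¹` of the weight `w = eˣ`.
-/

namespace FiniteMarkov

variable {E : Type*} {π : E → ℝ}

section PathLaw

variable [MeasurableSpace E] {p : Measure (ℕ → E)} {P : Matrix E E ℝ}

/-- `p` is the law on path space of the Markov chain with initial distribution `π` and transition
matrix `P`, characterized by its values on cylinders. -/
def IsMarkovLaw (p : Measure (ℕ → E)) (π : E → ℝ) (P : Matrix E E ℝ) : Prop :=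
  ∀ (m : ℕ) (x : ℕ → E), p {ω | ∀ l ≤ m, ω l = x l} =
    ENNReal.ofReal (π (x 0) * ∏ l ∈ Finset.range m, P (x l) (x (l + 1)))

lemma IsMarkovLaw.measureReal_path (hp : IsMarkovLaw p π P) (hπ : 0 ≤ π) (hP : ∀ i j, 0 ≤ P i j)
    {n : ℕ} (y : Fin (n + 1) → E) :
    p.real {ω | (fun l : Fin (n + 1) ↦ ω l) = y} =
      π (y 0) * ∏ l : Fin n, P (y l.castSucc) (y l.succ) := by
  obtain ⟨x, rfl⟩ : ∃ x : ℕ → E, (fun l : Fin (n + 1) ↦ x l) = y :=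
    ⟨fun l ↦ y (Fin.ofNat (n + 1) l), by simp⟩
  have hcyl : {ω : ℕ → E | (fun l : Fin (n + 1) ↦ ω l) = fun l : Fin (n + 1) ↦ x l} =
      {ω | ∀ l ≤ n, ω l = x l} := by
    ext ω
    simp [funext_iff, Fin.forall_iff]
  rw [hcyl, Measure.real, hp, ENNReal.toReal_ofReal
    (mul_nonneg (hπ _) (Finset.prod_nonneg fun l _ ↦ hP _ _)), Finset.prod_range]
  rfl

lemma measurable_path (n : ℕ) : Measurable fun (ω : ℕ → E) (l : Fin n) ↦ ω l :=
  measurable_pi_lambda _ fun _ ↦ measurable_pi_apply _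

lemma integrable_comp_path [Finite E] [DiscreteMeasurableSpace E] [IsFiniteMeasure p] {n : ℕ}
    (F : (Fin n → E) → ℝ) : Integrable (fun ω : ℕ → E ↦ F fun l ↦ ω l) p :=
  Integrable.of_finite.comp_measurable (measurable_path n)

end PathLaw

variable [Fintype E]

section WeightedInnerProduct

lemma sq_dotProduct_mul_le_of_pos {w : E → ℝ} (hπ : 0 ≤ π) (hw : ∀ i, 0 < w i) (f h : E → ℝ) :
    (π ⬝ᵥ (f * h)) ^ 2 ≤ (π ⬝ᵥ (w⁻¹ * f ^ 2)) * (π ⬝ᵥ (w * h ^ 2)) := by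
  refine Finset.sum_sq_le_sum_mul_sum_of_sq_le_mul _
    (fun i _ ↦ mul_nonneg (hπ i) (mul_nonneg (inv_nonneg.2 (hw i).le) (sq_nonneg _)))
    (fun i _ ↦ mul_nonneg (hπ i) (mul_nonneg (hw i).le (sq_nonneg _))) fun i _ ↦ le_of_eq ?_
  have := (hw i).ne'
  simp only [Pi.mul_apply, Pi.inv_apply, Pi.pow_apply]
  field_simp

lemma sq_dotProduct_mul_le (hπ : 0 ≤ π) (f h : E → ℝ) :
    (π ⬝ᵥ (f * h)) ^ 2 ≤ (π ⬝ᵥ f ^ 2) * (π ⬝ᵥ h ^ 2) := by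
  simpa using sq_dotProduct_mul_le_of_pos (w := 1) hπ (fun _ ↦ one_pos) f h

lemma dotProduct_sub_mean (hπ : ∑ i, π i = 1) (f : E → ℝ) :
    π ⬝ᵥ (f - (π ⬝ᵥ f) • 1) = 0 := by
  rw [dotProduct_sub, dotProduct_smul, dotProduct_one, hπ, smul_eq_mul, mul_one, sub_self]

lemma dotProduct_sub_mean_sq (hπ : ∑ i, π i = 1) (f : E → ℝ) :
    π ⬝ᵥ (f - (π ⬝ᵥ f) • 1) ^ 2 = π ⬝ᵥ f ^ 2 - (π ⬝ᵥ f) ^ 2 := by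
  have hexpand : (f - (π ⬝ᵥ f) • 1) ^ 2 = f ^ 2 - (2 * (π ⬝ᵥ f)) • f + (π ⬝ᵥ f) ^ 2 • 1 := by
    ext i; simp; ring
  rw [hexpand, dotProduct_add, dotProduct_sub, dotProduct_smul, dotProduct_smul, dotProduct_one, hπ]
  simp only [smul_eq_mul]
  ring

lemma sq_dotProduct_le (hπ : π ∈ stdSimplex ℝ E) (f : E → ℝ) : (π ⬝ᵥ f) ^ 2 ≤ π ⬝ᵥ f ^ 2 := by
  simpa [dotProduct_one, hπ.2] using sq_dotProduct_mul_le hπ.1 1 f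

end WeightedInnerProduct

section SpectralGap

/-- A `Q`-matrix (generator of a continuous-time Markov chain) on `E`; the vanishing of the row
sums is encoded as `Q 1 = 0`. -/
structure IsQMatrix (Q : Matrix E E ℝ) : Prop where
  nonneg_of_ne : ∀ i j, i ≠ j → 0 ≤ Q i j
  mulVec_one : Q *ᵥ 1 = 0

/-- The spectral gap `λ(Q)` of `Q` in `L²(π)`: the infimum of `-⟨Qf, f⟩_π` over the mean-zero
functions `f` of norm one. As `sInf ∅ = 0`, it is `0` when `π` is a point mass. -/
noncomputable def spectralGap (Q : Matrix E E ℝ) (π : E → ℝ) : ℝ :=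
  sInf {c | ∃ f : E → ℝ, √(π ⬝ᵥ f ^ 2) = 1 ∧ π ⬝ᵥ f = 0 ∧ c = -(π ⬝ᵥ ((Q *ᵥ f) * f))}

variable {Q : Matrix E E ℝ}

lemma IsQMatrix.smul (hQ : IsQMatrix Q) {s : ℝ} (hs : 0 ≤ s) : IsQMatrix (s • Q) where
  nonneg_of_ne i j hij := mul_nonneg hs (hQ.nonneg_of_ne i j hij)
  mulVec_one := by rw [smul_mulVec, hQ.mulVec_one, smul_zero]

lemma IsQMatrix.two_smul_mulVec_mul_le (hQ : IsQMatrix Q) (f : E → ℝ) :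
    (2 : ℝ) • ((Q *ᵥ f) * f) ≤ Q *ᵥ f ^ 2 := by
  intro i
  have hrow : ∑ j, Q i j = 0 := by
    simpa [mulVec, dotProduct_one] using congrFun hQ.mulVec_one i
  have hsq : ∑ j, Q i j * (f j - f i) ^ 2 = (Q *ᵥ f ^ 2) i - 2 * ((Q *ᵥ f) i * f i) := by
    calc ∑ j, Q i j * (f j - f i) ^ 2
        = ∑ j, Q i j * f j ^ 2 - 2 * ((∑ j, Q i j * f j) * f i) + (∑ j, Q i j) * f i ^ 2 := by
          simp only [Finset.sum_mul, Finset.mul_sum, ← Finset.sum_sub_distrib,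
            ← Finset.sum_add_distrib]
          exact Finset.sum_congr rfl fun j _ ↦ by ring
      _ = _ := by rw [hrow, zero_mul, add_zero]; rfl
  have hnonneg : 0 ≤ ∑ j, Q i j * (f j - f i) ^ 2 := Finset.sum_nonneg fun j _ ↦ by
    rcases eq_or_ne i j with rfl | hij
    · simp
    · exact mul_nonneg (hQ.nonneg_of_ne i j hij) (sq_nonneg _)
  simpa using sub_nonneg.1 (hsq ▸ hnonneg)

lemma IsQMatrix.dotProduct_mulVec_mul_nonpos (hQ : IsQMatrix Q) (hπ : 0 ≤ π)
    (hinv : π ᵥ* Q = 0) (f : E → ℝ) : π ⬝ᵥ ((Q *ᵥ f) * f) ≤ 0 := by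
  have h := dotProduct_le_dotProduct_of_nonneg_left (hQ.two_smul_mulVec_mul_le f) hπ
  rw [dotProduct_smul, dotProduct_mulVec, hinv, zero_dotProduct, smul_eq_mul] at h
  linarith

lemma spectralGap_nonneg (hQ : IsQMatrix Q) (hπ : 0 ≤ π) (hinv : π ᵥ* Q = 0) :
    0 ≤ spectralGap Q π := by
  refine Real.sInf_nonneg ?_
  rintro _ ⟨f, -, -, rfl⟩
  exact neg_nonneg.2 (hQ.dotProduct_mulVec_mul_nonpos hπ hinv f)

lemma spectralGap_mul_le (hQ : IsQMatrix Q) (hπ : 0 ≤ π) (hinv : π ᵥ* Q = 0) {f : E → ℝ}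
    (hf : π ⬝ᵥ f = 0) : spectralGap Q π * (π ⬝ᵥ f ^ 2) ≤ -(π ⬝ᵥ ((Q *ᵥ f) * f)) := by
  have hnonneg : 0 ≤ π ⬝ᵥ f ^ 2 := dotProduct_nonneg_of_nonneg hπ fun i ↦ sq_nonneg (f i)
  rcases hnonneg.eq_or_lt with hnorm | hnorm
  · rw [← hnorm, mul_zero, neg_nonneg]
    exact hQ.dotProduct_mulVec_mul_nonpos hπ hinv f
  set c := √(π ⬝ᵥ f ^ 2)
  have hc : c ^ 2 = π ⬝ᵥ f ^ 2 := Real.sq_sqrt hnorm.le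
  have hgap : spectralGap Q π ≤ -(π ⬝ᵥ ((Q *ᵥ (c⁻¹ • f)) * (c⁻¹ • f))) := by
    refine csInf_le ⟨0, ?_⟩ ⟨c⁻¹ • f, ?_, ?_, rfl⟩
    · rintro _ ⟨h, -, -, rfl⟩
      exact neg_nonneg.2 (hQ.dotProduct_mulVec_mul_nonpos hπ hinv h)
    · rw [smul_pow, dotProduct_smul, inv_pow, hc, smul_eq_mul, inv_mul_cancel₀ hnorm.ne',
        Real.sqrt_one]
    · rw [dotProduct_smul, hf, smul_zero]
  rw [mulVec_smul, smul_mul_smul_comm, dotProduct_smul, ← mul_inv, ← sq, hc, smul_eq_mul,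
    ← mul_neg, inv_mul_eq_div, le_div_iff₀ hnorm] at hgap
  exact hgap

end SpectralGap

/-- `P` contracts the mean-zero functions of `L²(π)` by the factor `|ρ|`. -/
def ContractsMeanZero (P : Matrix E E ℝ) (π : E → ℝ) (ρ : ℝ) : Prop :=
  ∀ f : E → ℝ, π ⬝ᵥ f = 0 → π ⬝ᵥ (P *ᵥ f) ^ 2 ≤ ρ ^ 2 * (π ⬝ᵥ f ^ 2)

section Semigroup

variable [DecidableEq E] {Q : Matrix E E ℝ}

open scoped Matrix.Norms.Operator in
lemma hasSum_exp_apply (A : Matrix E E ℝ) (i j : E) :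
    HasSum (fun n : ℕ ↦ (n.factorial : ℝ)⁻¹ * (A ^ n) i j) (NormedSpace.exp A i j) :=
  Pi.hasSum.1 (Pi.hasSum.1 (NormedSpace.exp_series_hasSum_exp' (𝕂 := ℝ) A) i) j

lemma exp_apply_nonneg_of_nonneg {A : Matrix E E ℝ} (hA : ∀ i j, 0 ≤ A i j) (i j : E) :
    0 ≤ NormedSpace.exp A i j :=
  (hasSum_exp_apply A i j).nonneg fun n ↦ mul_nonneg (by positivity) (pow_apply_nonneg hA n i j)

-- A large enough multiple of the identity turns `A` into an entrywise nonnegative matrix.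
lemma exp_apply_nonneg {A : Matrix E E ℝ} (hA : ∀ i j, i ≠ j → 0 ≤ A i j) (i j : E) :
    0 ≤ NormedSpace.exp A i j := by
  set c := ∑ i, |A i i|
  have hshift : ∀ i j, 0 ≤ (A + c • (1 : Matrix E E ℝ)) i j := fun i j ↦ by
    rcases eq_or_ne i j with rfl | hij
    · have hdiag : |A i i| ≤ c :=
        Finset.single_le_sum (f := fun i ↦ |A i i|) (fun i _ ↦ abs_nonneg _) (Finset.mem_univ i)
      simpa using neg_le_iff_add_nonneg.1 ((neg_le_neg hdiag).trans (neg_abs_le (A i i)))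
    · simpa [one_apply_ne hij] using hA i j hij
  have hsplit : A = diagonal (fun _ ↦ -c) + (A + c • (1 : Matrix E E ℝ)) := by
    ext i j
    rcases eq_or_ne i j with rfl | hij <;> simp [*]
  have hcomm : Commute (diagonal fun _ : E ↦ -c) (A + c • (1 : Matrix E E ℝ)) := by
    rw [← smul_one_eq_diagonal]
    exact (Commute.one_left _).smul_left _
  rw [hsplit, Matrix.exp_add_of_commute _ _ hcomm, Matrix.exp_diagonal, diagonal_mul, Pi.coe_exp,
    ← Real.exp_eq_exp_ℝ]
  exact mul_nonneg (Real.exp_pos _).le (exp_apply_nonneg_of_nonneg hshift i j)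

open scoped Matrix.Norms.Operator in
lemma hasDerivAt_exp_smul_mulVec (A : Matrix E E ℝ) (v : E → ℝ) (s : ℝ) :
    HasDerivAt (fun s : ℝ ↦ NormedSpace.exp (s • A) *ᵥ v)
      (A *ᵥ (NormedSpace.exp (s • A) *ᵥ v)) s := by
  rw [mulVec_mulVec]
  exact ((mulVecBilin ℝ ℝ).flip v).toContinuousLinearMap.hasFDerivAt.comp_hasDerivAt s
    (hasDerivAt_exp_smul_const' (𝕂 := ℝ) A s)

lemma exp_mulVec_eq_self {A : Matrix E E ℝ} {v : E → ℝ} (hv : A *ᵥ v = 0) :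
    NormedSpace.exp A *ᵥ v = v := by
  have hderiv : ∀ s : ℝ, HasDerivAt (fun s : ℝ ↦ NormedSpace.exp (s • A) *ᵥ v) 0 s := fun s ↦ by
    have hcomm : Commute A (NormedSpace.exp (s • A)) := ((Commute.refl A).smul_right s).exp_right
    refine (hasDerivAt_exp_smul_mulVec A v s).congr_deriv ?_
    rw [mulVec_mulVec, hcomm.eq, ← mulVec_mulVec, hv, mulVec_zero]
  simpa using is_const_of_deriv_eq_zero (fun s ↦ (hderiv s).differentiableAt)
    (fun s ↦ (hderiv s).deriv) 1 0

lemma vecMul_exp_eq_self {A : Matrix E E ℝ} {v : E → ℝ} (hv : v ᵥ* A = 0) :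
    v ᵥ* NormedSpace.exp A = v := by
  rw [← mulVec_transpose] at hv ⊢
  rw [← Matrix.exp_transpose, exp_mulVec_eq_self hv]

lemma IsQMatrix.exp_mem_rowStochastic (hQ : IsQMatrix Q) :
    NormedSpace.exp Q ∈ rowStochastic ℝ E :=
  ⟨exp_apply_nonneg hQ.nonneg_of_ne, exp_mulVec_eq_self hQ.mulVec_one⟩

lemma contractsMeanZero_exp_smul {κ s : ℝ} (hinv : π ᵥ* Q = 0)
    (hgap : ∀ f : E → ℝ, π ⬝ᵥ f = 0 → κ * (π ⬝ᵥ f ^ 2) ≤ -(π ⬝ᵥ ((Q *ᵥ f) * f))) (hs : 0 ≤ s) :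
    ContractsMeanZero (NormedSpace.exp (s • Q)) π (Real.exp (-(s * κ))) := by
  intro f hf
  set u : ℝ → E → ℝ := fun s ↦ NormedSpace.exp (s • Q) *ᵥ f
  have hmean : ∀ s, π ⬝ᵥ u s = 0 := fun s ↦ by
    rw [dotProduct_mulVec, vecMul_exp_eq_self (by rw [vecMul_smul, hinv, smul_zero]), hf]
  have hnorm : ∀ s, HasDerivAt (fun s ↦ π ⬝ᵥ u s ^ 2) (2 * (π ⬝ᵥ ((Q *ᵥ u s) * u s))) s := by
    intro s
    have hcoord := hasDerivAt_pi.1 (hasDerivAt_exp_smul_mulVec Q f s)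
    refine (HasDerivAt.fun_sum fun i _ ↦ ((hcoord i).pow 2).const_mul (π i)).congr_deriv ?_
    rw [dotProduct, Finset.mul_sum]
    refine Finset.sum_congr rfl fun i _ ↦ ?_
    simp only [Pi.mul_apply, u]
    ring
  have hderiv : ∀ s, HasDerivAt (fun s ↦ Real.exp (2 * κ * s) * (π ⬝ᵥ u s ^ 2))
      (Real.exp (2 * κ * s) * (2 * (κ * (π ⬝ᵥ u s ^ 2) + π ⬝ᵥ ((Q *ᵥ u s) * u s)))) s := by
    intro s
    convert! ((hasDerivAt_id s).const_mul (2 * κ)).exp.mul (hnorm s) using 1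
    simp only [id]
    ring
  have hanti : Antitone fun s ↦ Real.exp (2 * κ * s) * (π ⬝ᵥ u s ^ 2) :=
    antitone_of_hasDerivAt_nonpos hderiv fun s ↦
      mul_nonpos_of_nonneg_of_nonpos (Real.exp_pos _).le (by linarith [hgap _ (hmean s)])
  have hdecay : Real.exp (2 * κ * s) * (π ⬝ᵥ u s ^ 2) ≤ π ⬝ᵥ f ^ 2 := by
    simpa [u] using hanti hs
  rwa [← Real.exp_nat_mul, Nat.cast_ofNat, show 2 * -(s * κ) = -(2 * κ * s) by ring, Real.exp_neg,
    ← div_eq_inv_mul, le_div_iff₀' (Real.exp_pos _)]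

end Semigroup

section LeonPerron

/-- The quadratic form `⟨((1 - ρ)Π + ρI)f, f⟩_π` of the Leon–Perron operator, where `Π` is the
projection onto the constants. It dominates the bilinear form of every operator which fixes the
constants, preserves `π` and contracts mean-zero functions by `ρ`. -/
def leonPerronForm (π : E → ℝ) (ρ : ℝ) (f : E → ℝ) : ℝ :=
  (1 - ρ) * (π ⬝ᵥ f) ^ 2 + ρ * (π ⬝ᵥ f ^ 2)

variable {ρ : ℝ}

lemma sq_dotProduct_le_leonPerronForm (hπ : π ∈ stdSimplex ℝ E) (hρ : 0 ≤ ρ) (f : E → ℝ) :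
    (π ⬝ᵥ f) ^ 2 ≤ leonPerronForm π ρ f := by
  have := mul_le_mul_of_nonneg_left (sq_dotProduct_le hπ f) hρ
  rw [leonPerronForm]
  linarith

lemma sq_mul_add_le {x y c A B : ℝ} (hρ : 0 ≤ ρ) (hA : 0 ≤ A) (hB : 0 ≤ B)
    (hc : c ^ 2 ≤ ρ ^ 2 * A * B) :
    (x * y + c) ^ 2 ≤ (x ^ 2 + ρ * A) * (y ^ 2 + ρ * B) := by
  have hcross : 2 * x * y * c ≤ ρ * (x ^ 2 * B + y ^ 2 * A) := by
    refine le_of_abs_le (abs_le_of_sq_le_sq ?_ (by positivity))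
    calc (2 * x * y * c) ^ 2 = 4 * x ^ 2 * y ^ 2 * c ^ 2 := by ring
      _ ≤ 4 * x ^ 2 * y ^ 2 * (ρ ^ 2 * A * B) := by gcongr
      _ ≤ (ρ * (x ^ 2 * B + y ^ 2 * A)) ^ 2 := by
        linarith [sq_nonneg (ρ * (x ^ 2 * B - y ^ 2 * A))]
  linarith

lemma sq_dotProduct_mulVec_mul_le {P : Matrix E E ℝ} (hπ : π ∈ stdSimplex ℝ E)
    (hP : P *ᵥ 1 = 1) (hinv : π ᵥ* P = π) (hρ : 0 ≤ ρ) (hcontr : ContractsMeanZero P π ρ)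
    (u v : E → ℝ) :
    (π ⬝ᵥ ((P *ᵥ u) * v)) ^ 2 ≤ leonPerronForm π ρ u * leonPerronForm π ρ v := by
  set u₀ := u - (π ⬝ᵥ u) • (1 : E → ℝ) with hu₀
  set v₀ := v - (π ⬝ᵥ v) • (1 : E → ℝ) with hv₀
  have hmean : π ⬝ᵥ (P *ᵥ u₀) = 0 := by
    rw [dotProduct_mulVec, hinv, dotProduct_sub_mean hπ.2]
  have hsplit : π ⬝ᵥ ((P *ᵥ u) * v) = (π ⬝ᵥ u) * (π ⬝ᵥ v) + π ⬝ᵥ ((P *ᵥ u₀) * v₀) := by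
    have hPu : P *ᵥ u = P *ᵥ u₀ + (π ⬝ᵥ u) • 1 := by
      rw [hu₀, mulVec_sub, mulVec_smul, hP, sub_add_cancel]
    rw [hPu, add_mul, smul_one_mul, dotProduct_add, dotProduct_smul, smul_eq_mul, add_comm,
      hv₀, mul_sub, mul_smul_one, dotProduct_sub, dotProduct_smul, hmean, smul_zero, sub_zero]
  have hcov : (π ⬝ᵥ ((P *ᵥ u₀) * v₀)) ^ 2 ≤ ρ ^ 2 * (π ⬝ᵥ u₀ ^ 2) * (π ⬝ᵥ v₀ ^ 2) :=
    (sq_dotProduct_mul_le hπ.1 _ _).trans <| mul_le_mul_of_nonneg_right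
      (hcontr _ (dotProduct_sub_mean hπ.2 u))
      (dotProduct_nonneg_of_nonneg hπ.1 fun i ↦ sq_nonneg (v₀ i))
  have hform : ∀ f : E → ℝ, leonPerronForm π ρ f =
      (π ⬝ᵥ f) ^ 2 + ρ * (π ⬝ᵥ (f - (π ⬝ᵥ f) • 1) ^ 2) := fun f ↦ by
    rw [dotProduct_sub_mean_sq hπ.2, leonPerronForm]
    ring
  rw [hsplit, hform u, hform v]
  exact sq_mul_add_le hρ (dotProduct_nonneg_of_nonneg hπ.1 fun i ↦ sq_nonneg (u₀ i))
    (dotProduct_nonneg_of_nonneg hπ.1 fun i ↦ sq_nonneg (v₀ i)) hcov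

variable [DecidableEq E] {P : Matrix E E ℝ} {w : E → ℝ} {r : ℝ}

-- With `v = w · Pu`, the left side is `⟨Pu, v⟩_π`, so its square is at most the product of the
-- Leon–Perron forms of `u` and `v`, and the form of `v` gives back one factor of the left side.
lemma dotProduct_inv_mul_diagonal_mul_mulVec_sq_le (hπ : π ∈ stdSimplex ℝ E)
    (hP : P *ᵥ 1 = 1) (hinv : π ᵥ* P = π) (hρ : 0 ≤ ρ) (hcontr : ContractsMeanZero P π ρ)
    (hw : ∀ i, 0 < w i)
    (hform : ∀ f, leonPerronForm π ρ f ≤ r * (π ⬝ᵥ (w⁻¹ * f ^ 2))) (u : E → ℝ) :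
    π ⬝ᵥ (w⁻¹ * ((diagonal w * P) *ᵥ u) ^ 2) ≤ r ^ 2 * (π ⬝ᵥ (w⁻¹ * u ^ 2)) := by
  have hnonneg : ∀ f : E → ℝ, 0 ≤ π ⬝ᵥ (w⁻¹ * f ^ 2) := fun f ↦
    dotProduct_nonneg_of_nonneg hπ.1 fun i ↦ mul_nonneg (inv_nonneg.2 (hw i).le) (sq_nonneg _)
  set v := (diagonal w * P) *ᵥ u with hv
  have hpair : w⁻¹ * v ^ 2 = (P *ᵥ u) * v := by
    ext i
    have := (hw i).ne'
    rw [hv, ← mulVec_mulVec]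
    simp only [Pi.mul_apply, Pi.inv_apply, Pi.pow_apply, mulVec_diagonal]
    field_simp
  have hsq : (π ⬝ᵥ (w⁻¹ * v ^ 2)) ^ 2 ≤
      (r * (π ⬝ᵥ (w⁻¹ * u ^ 2))) * (r * (π ⬝ᵥ (w⁻¹ * v ^ 2))) := by
    have hform_nonneg : ∀ f, 0 ≤ leonPerronForm π ρ f := fun f ↦
      (sq_nonneg _).trans (sq_dotProduct_le_leonPerronForm hπ hρ f)
    calc (π ⬝ᵥ (w⁻¹ * v ^ 2)) ^ 2 ≤ leonPerronForm π ρ u * leonPerronForm π ρ v :=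
          hpair ▸ sq_dotProduct_mulVec_mul_le hπ hP hinv hρ hcontr u v
      _ ≤ _ := mul_le_mul (hform u) (hform v) (hform_nonneg v)
          ((hform_nonneg u).trans (hform u))
  rcases (hnonneg v).eq_or_lt with hzero | hpos
  · rw [← hzero]
    exact mul_nonneg (sq_nonneg r) (hnonneg u)
  · refine le_of_mul_le_mul_right ?_ hpos
    linarith

lemma dotProduct_diagonal_mul_pow_mulVec_le (hπ : π ∈ stdSimplex ℝ E)
    (hP : P *ᵥ 1 = 1) (hinv : π ᵥ* P = π) (hρ : 0 ≤ ρ) (hcontr : ContractsMeanZero P π ρ)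
    (hw : ∀ i, 0 < w i) (hr : 0 ≤ r)
    (hform : ∀ f, leonPerronForm π ρ f ≤ r * (π ⬝ᵥ (w⁻¹ * f ^ 2))) (n : ℕ) :
    π ⬝ᵥ ((diagonal w * P) ^ n *ᵥ w) ≤ r ^ (n + 1) := by
  have hmean : ∀ f, (π ⬝ᵥ f) ^ 2 ≤ r * (π ⬝ᵥ (w⁻¹ * f ^ 2)) := fun f ↦
    (sq_dotProduct_le_leonPerronForm hπ hρ f).trans (hform f)
  have hself : w⁻¹ * w ^ 2 = w := by
    ext i
    simp [sq, (hw i).ne']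
  have hiter : π ⬝ᵥ (w⁻¹ * ((diagonal w * P) ^ n *ᵥ w) ^ 2) ≤ (r ^ 2) ^ n * (π ⬝ᵥ w) := by
    induction n with
    | zero => simp [hself]
    | succ n ih =>
      rw [pow_succ' (diagonal w * P), ← mulVec_mulVec, pow_succ' (r ^ 2), mul_assoc (r ^ 2)]
      exact (dotProduct_inv_mul_diagonal_mul_mulVec_sq_le hπ hP hinv hρ hcontr hw hform _).trans
        (mul_le_mul_of_nonneg_left ih (sq_nonneg r))
  have hw_mean : π ⬝ᵥ w ≤ r := by
    have h := hmean w
    have hnonneg : 0 ≤ π ⬝ᵥ w := dotProduct_nonneg_of_nonneg hπ.1 fun i ↦ (hw i).le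
    rw [hself, sq] at h
    rcases hnonneg.eq_or_lt with hzero | hpos
    · exact hzero ▸ hr
    · exact le_of_mul_le_mul_right h hpos
  refine le_of_abs_le (abs_le_of_sq_le_sq ?_ (pow_nonneg hr _))
  calc _ ≤ r * ((r ^ 2) ^ n * r) := (hmean _).trans <| by gcongr; exact hiter.trans (by gcongr)
    _ = (r ^ (n + 1)) ^ 2 := by ring

end LeonPerron

section ExponentialTilt

variable {x : E → ℝ} {α β κ L : ℝ}

-- The chord of the convex function `y ↦ (κ + L - y)⁻¹` on `[α, β]` lies above it.
lemma mul_dotProduct_inv_le_one (hπ : π ∈ stdSimplex ℝ E) (hmean : π ⬝ᵥ x = 0)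
    (hx : ∀ i, α ≤ x i ∧ x i ≤ β) (hκ : 0 ≤ κ) (hα : α < κ + L) (hβ : β < κ + L)
    (hL : (β - α) ^ 2 ≤ 4 * κ * L) :
    κ * (π ⬝ᵥ (fun i ↦ κ + L - x i)⁻¹) ≤ 1 := by
  set s := κ + L with hs
  have hden : 0 < (s - α) * (s - β) := mul_pos (sub_pos.2 hα) (sub_pos.2 hβ)
  have hchord : (fun i ↦ s - x i)⁻¹ ≤ ((s - α) * (s - β))⁻¹ • ((s - α - β) • 1 + x) := by
    intro i
    have hpos : 0 < s - x i := by linarith [(hx i).2]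
    simp only [Pi.inv_apply, Pi.smul_apply, Pi.add_apply, Pi.one_apply, smul_eq_mul, mul_one]
    rw [inv_mul_eq_div, inv_eq_one_div, div_le_div_iff₀ hpos hden]
    linarith [mul_nonneg (sub_nonneg.2 (hx i).1) (sub_nonneg.2 (hx i).2)]
  have hmean_inv : π ⬝ᵥ (fun i ↦ s - x i)⁻¹ ≤ (s - α - β) / ((s - α) * (s - β)) := by
    refine (dotProduct_le_dotProduct_of_nonneg_left hchord hπ.1).trans_eq ?_
    rw [dotProduct_smul, dotProduct_add, dotProduct_smul, dotProduct_one, hπ.2, hmean,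
      smul_eq_mul, smul_eq_mul, mul_one, add_zero, inv_mul_eq_div]
  calc κ * (π ⬝ᵥ (fun i ↦ s - x i)⁻¹)
      ≤ κ * ((s - α - β) / ((s - α) * (s - β))) := mul_le_mul_of_nonneg_left hmean_inv hκ
    _ ≤ 1 := by
      rw [← mul_div_assoc, div_le_one hden, hs]
      linarith [sq_nonneg (L - (α + β) / 2)]

lemma mul_sq_dotProduct_le (hπ : π ∈ stdSimplex ℝ E) (hmean : π ⬝ᵥ x = 0)
    (hx : ∀ i, α ≤ x i ∧ x i ≤ β) (hκ : 0 < κ) (hL : (β - α) ^ 2 < 4 * κ * L) (f : E → ℝ) :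
    κ * (π ⬝ᵥ f) ^ 2 ≤ π ⬝ᵥ ((fun i ↦ κ + L - x i) * f ^ 2) := by
  have hconst : ∀ c : ℝ, π ⬝ᵥ (fun _ ↦ c) = c := fun c ↦ by
    rw [dotProduct, ← Finset.sum_mul, hπ.2, one_mul]
  have hα : α ≤ 0 := hconst α ▸ hmean ▸
    dotProduct_le_dotProduct_of_nonneg_left (fun i ↦ (hx i).1) hπ.1
  have hLpos : 0 < L := pos_of_mul_pos_right ((sq_nonneg _).trans_lt hL) (by positivity)
  have hgap : β - α < κ + L :=
    lt_of_pow_lt_pow_left₀ 2 (by positivity) (by linarith [sq_nonneg (κ - L)])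
  have hw : ∀ i, 0 < κ + L - x i := fun i ↦ by linarith [(hx i).2]
  set w : E → ℝ := fun i ↦ κ + L - x i
  have hnonneg : 0 ≤ π ⬝ᵥ (w * f ^ 2) :=
    dotProduct_nonneg_of_nonneg hπ.1 fun i ↦ mul_nonneg (hw i).le (sq_nonneg _)
  calc κ * (π ⬝ᵥ f) ^ 2 ≤ κ * ((π ⬝ᵥ w⁻¹) * (π ⬝ᵥ (w * f ^ 2))) := by
        gcongr
        simpa using sq_dotProduct_mul_le_of_pos hπ.1 hw 1 f
    _ = κ * (π ⬝ᵥ w⁻¹) * (π ⬝ᵥ (w * f ^ 2)) := by ring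
    _ ≤ π ⬝ᵥ (w * f ^ 2) := mul_le_of_le_one_left hnonneg
        (mul_dotProduct_inv_le_one hπ hmean hx hκ.le (by linarith) (by linarith) hL.le)

lemma leonPerronForm_le_exp_neg {ρ r : ℝ} (hπ : π ∈ stdSimplex ℝ E) (hmean : π ⬝ᵥ x = 0)
    (hx : ∀ i, α ≤ x i ∧ x i ≤ β) (hρ : ρ < 1) (hr : 0 ≤ r)
    (hrρ : (r * (β - α)) ^ 2 < 4 * (1 - ρ) * (r - 1)) (f : E → ℝ) :
    leonPerronForm π ρ f ≤ r * (π ⬝ᵥ ((fun i ↦ Real.exp (x i))⁻¹ * f ^ 2)) := by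
  have hkey : (1 - ρ) * (π ⬝ᵥ f) ^ 2 ≤
      π ⬝ᵥ ((fun i ↦ 1 - ρ + (r - 1) - (r • x) i) * f ^ 2) :=
    mul_sq_dotProduct_le (x := r • x) hπ (by rw [dotProduct_smul, hmean, smul_zero])
      (fun i ↦ ⟨mul_le_mul_of_nonneg_left (hx i).1 hr, mul_le_mul_of_nonneg_left (hx i).2 hr⟩)
      (sub_pos.2 hρ) (by rwa [← mul_sub]) f
  have hsplit : (fun i ↦ 1 - ρ + (r - 1) - (r • x) i) * f ^ 2 =
      r • ((1 - x) * f ^ 2) - ρ • f ^ 2 := by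
    ext i
    simp only [Pi.mul_apply, Pi.smul_apply, Pi.sub_apply, Pi.one_apply, Pi.pow_apply, smul_eq_mul]
    ring
  have hexp : (1 - x) * f ^ 2 ≤ (fun i ↦ Real.exp (x i))⁻¹ * f ^ 2 := fun i ↦
    mul_le_mul_of_nonneg_right (by simpa [Real.exp_neg] using Real.one_sub_le_exp_neg (x i))
      (sq_nonneg _)
  have htilt := mul_le_mul_of_nonneg_left (dotProduct_le_dotProduct_of_nonneg_left hexp hπ.1) hr
  rw [hsplit, dotProduct_sub, dotProduct_smul, dotProduct_smul, smul_eq_mul, smul_eq_mul] at hkey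
  rw [leonPerronForm]
  linarith

end ExponentialTilt

section FeynmanKac

lemma dotProduct_pow_mulVec [DecidableEq E] (M : Matrix E E ℝ) (n : ℕ) (f h : E → ℝ) :
    f ⬝ᵥ (M ^ n *ᵥ h) = ∑ y : Fin (n + 1) → E,
      f (y 0) * ((∏ l : Fin n, M (y l.castSucc) (y l.succ)) * h (y (Fin.last n))) := by
  induction n generalizing f with
  | zero =>
    rw [pow_zero, one_mulVec]
    simpa [dotProduct] using
      ((Equiv.funUnique (Fin 1) E).sum_comp fun i ↦ f i * h i).symm
  | succ n ih =>
    rw [pow_succ', ← mulVec_mulVec, dotProduct_mulVec, ih,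
      ← (Fin.consEquiv fun _ : Fin (n + 2) ↦ E).sum_comp, Fintype.sum_prod_type, Finset.sum_comm]
    refine Finset.sum_congr rfl fun y _ ↦ ?_
    rw [vecMul, dotProduct, Finset.sum_mul]
    refine Finset.sum_congr rfl fun i _ ↦ ?_
    simp only [Fin.consEquiv_apply, Fin.prod_univ_succ, Fin.castSucc_zero, Fin.cons_zero,
      Fin.cons_succ, Fin.castSucc_succ, ← Fin.succ_last, mul_assoc]

variable [DecidableEq E] [MeasurableSpace E] [DiscreteMeasurableSpace E] {p : Measure (ℕ → E)}
  [IsFiniteMeasure p] {P : Matrix E E ℝ}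

lemma IsMarkovLaw.integral_prod (hp : IsMarkovLaw p π P) (hπ : 0 ≤ π)
    (hP : ∀ i j, 0 ≤ P i j) (d : E → ℝ) (n : ℕ) :
    ∫ ω, ∏ i ∈ Finset.range (n + 1), d (ω i) ∂p = π ⬝ᵥ ((diagonal d * P) ^ n *ᵥ d) := by
  set F : (Fin (n + 1) → E) → ℝ := fun y ↦ ∏ l, d (y l)
  calc ∫ ω, ∏ i ∈ Finset.range (n + 1), d (ω i) ∂p
      = ∫ y, F y ∂p.map (fun ω (l : Fin (n + 1)) ↦ ω l) := by
        rw [integral_map (measurable_path _).aemeasurable Integrable.of_finite.aestronglyMeasurable]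
        simp only [F, Finset.prod_range]
    _ = ∑ y, p.real {ω | (fun l : Fin (n + 1) ↦ ω l) = y} * F y := by
        rw [integral_fintype Integrable.of_finite]
        refine Finset.sum_congr rfl fun y _ ↦ ?_
        rw [map_measureReal_apply (measurable_path _) (measurableSet_singleton y)]
        rfl
    _ = π ⬝ᵥ ((diagonal d * P) ^ n *ᵥ d) := by
        rw [dotProduct_pow_mulVec]
        refine Finset.sum_congr rfl fun y _ ↦ ?_
        rw [hp.measureReal_path hπ hP]
        simp only [F, Fin.prod_univ_castSucc, diagonal_mul, Finset.prod_mul_distrib]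
        ring

variable {ρ r : ℝ}

lemma IsMarkovLaw.mgf_sum_le {α β : ℝ} {x : E → ℝ} (hp : IsMarkovLaw p π P)
    (hπ : π ∈ stdSimplex ℝ E) (hP : P ∈ rowStochastic ℝ E) (hinv : π ᵥ* P = π) (hρ₀ : 0 ≤ ρ)
    (hρ₁ : ρ < 1) (hcontr : ContractsMeanZero P π ρ) (hmean : π ⬝ᵥ x = 0)
    (hx : ∀ i, α ≤ x i ∧ x i ≤ β) (hr : 0 ≤ r)
    (hrρ : (r * (β - α)) ^ 2 < 4 * (1 - ρ) * (r - 1)) {k : ℕ} (hk : k ≠ 0) :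
    ProbabilityTheory.mgf (fun ω ↦ ∑ i ∈ Finset.range k, x (ω i)) p 1 ≤ r ^ k := by
  obtain ⟨n, rfl⟩ := Nat.exists_eq_succ_of_ne_zero hk
  simp only [ProbabilityTheory.mgf, one_mul, Real.exp_sum]
  rw [hp.integral_prod hπ.1 hP.1 (fun i ↦ Real.exp (x i))]
  exact dotProduct_diagonal_mul_pow_mulVec_le hπ hP.2 hinv hρ₀ hcontr (fun i ↦ Real.exp_pos _) hr
    (leonPerronForm_le_exp_neg hπ hmean hx hρ₁ hr hrρ) n

lemma IsMarkovLaw.measureReal_mean_sub_ge_le {a b ε θ : ℝ} {g : E → ℝ}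
    (hp : IsMarkovLaw p π P) (hπ : π ∈ stdSimplex ℝ E) (hP : P ∈ rowStochastic ℝ E)
    (hinv : π ᵥ* P = π) (hρ₀ : 0 ≤ ρ) (hρ₁ : ρ < 1) (hcontr : ContractsMeanZero P π ρ)
    (hg : ∀ i, a ≤ g i ∧ g i ≤ b) (hθ : 0 ≤ θ) (hr : 0 ≤ r)
    (hrρ : (r * (θ * (b - a))) ^ 2 < 4 * (1 - ρ) * (r - 1)) {k : ℕ} (hk : k ≠ 0) :
    p.real {ω | (k : ℝ)⁻¹ * ∑ i ∈ Finset.range k, g (ω i) - π ⬝ᵥ g ≥ ε} ≤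
      (Real.exp (-(θ * ε)) * r) ^ k := by
  set x : E → ℝ := θ • (g - (π ⬝ᵥ g) • 1)
  set S : (ℕ → E) → ℝ := fun ω ↦ ∑ i ∈ Finset.range k, x (ω i) with hS
  have hx_apply : ∀ i, x i = θ * (g i - π ⬝ᵥ g) := fun i ↦ by simp [x]
  have hmgf : ProbabilityTheory.mgf S p 1 ≤ r ^ k :=
    hp.mgf_sum_le (α := θ * (a - π ⬝ᵥ g)) (β := θ * (b - π ⬝ᵥ g)) hπ hP hinv hρ₀ hρ₁ hcontr
      (by rw [dotProduct_smul, dotProduct_sub_mean hπ.2, smul_zero])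
      (fun i ↦ by
        rw [hx_apply]
        exact ⟨by gcongr; exact (hg i).1, by gcongr; exact (hg i).2⟩)
      hr (by rwa [← mul_sub, sub_sub_sub_cancel_right]) hk
  have hS_exp : Integrable (fun ω ↦ Real.exp (1 * S ω)) p := by
    simp only [hS, Finset.sum_range]
    exact integrable_comp_path fun y ↦ Real.exp (1 * ∑ i, x (y i))
  have hS_eq : ∀ ω, S ω = k * (θ * ((k : ℝ)⁻¹ * ∑ i ∈ Finset.range k, g (ω i) - π ⬝ᵥ g)) := by
    intro ω
    simp only [hS, hx_apply, ← Finset.mul_sum, Finset.sum_sub_distrib, Finset.sum_const,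
      Finset.card_range, nsmul_eq_mul]
    field_simp
  calc p.real {ω | (k : ℝ)⁻¹ * ∑ i ∈ Finset.range k, g (ω i) - π ⬝ᵥ g ≥ ε}
      ≤ p.real {ω | k * (θ * ε) ≤ S ω} := measureReal_mono fun ω hω ↦ by
        rw [Set.mem_ofPred_eq, hS_eq]
        gcongr
        exact hω
    _ ≤ Real.exp (-1 * (k * (θ * ε))) * ProbabilityTheory.mgf S p 1 :=
      ProbabilityTheory.measure_ge_le_exp_mul_mgf _ zero_le_one hS_exp
    _ ≤ Real.exp (-(θ * ε)) ^ k * r ^ k := by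
      rw [← Real.exp_nat_mul, neg_one_mul, mul_neg]
      gcongr
    _ = (Real.exp (-(θ * ε)) * r) ^ k := (mul_pow _ _ _).symm

end FeynmanKac

section Asymptotics

open scoped Topology

-- `1 - e^{-δκ} ≥ δκ e^{-δκ}` and `e^{δL} - 1 ≥ δL` reduce the claim to
-- `D² e^{δ(2L + κ)} < 4κL`, which holds at `δ = 0`.
lemma eventually_sq_exp_mul_lt {κ L D : ℝ} (hκ : 0 < κ) (hD : D ^ 2 < 4 * κ * L) :
    ∀ᶠ δ : ℝ in 𝓝[>] 0, (Real.exp (δ * L) * (δ * D)) ^ 2 <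
      4 * (1 - Real.exp (-(δ * κ))) * (Real.exp (δ * L) - 1) := by
  have hL : 0 < L := pos_of_mul_pos_right ((sq_nonneg D).trans_lt hD) (by positivity)
  have hcont : Tendsto (fun δ : ℝ ↦ D ^ 2 * Real.exp (δ * (2 * L + κ))) (𝓝[>] 0) (𝓝 (D ^ 2)) :=
    tendsto_nhdsWithin_of_tendsto_nhds <| by
      simpa using (show Continuous fun δ : ℝ ↦ D ^ 2 * Real.exp (δ * (2 * L + κ)) by
        fun_prop).tendsto 0
  filter_upwards [hcont.eventually_lt_const hD, self_mem_nhdsWithin] with δ hlt (hδ : 0 < δ)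
  have hcontraction : δ * κ * Real.exp (-(δ * κ)) ≤ 1 - Real.exp (-(δ * κ)) := by
    have hone : Real.exp (δ * κ) * Real.exp (-(δ * κ)) = 1 := by
      rw [← Real.exp_add, add_neg_cancel, Real.exp_zero]
    have := mul_le_mul_of_nonneg_right (Real.add_one_le_exp (δ * κ)) (Real.exp_pos (-(δ * κ))).le
    linarith
  have hgrowth : δ * L ≤ Real.exp (δ * L) - 1 := by linarith [Real.add_one_le_exp (δ * L)]
  calc (Real.exp (δ * L) * (δ * D)) ^ 2
      = δ ^ 2 * Real.exp (-(δ * κ)) * (D ^ 2 * Real.exp (δ * (2 * L + κ))) := by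
        rw [show δ * (2 * L + κ) = δ * L + δ * L + δ * κ by ring, Real.exp_add, Real.exp_add,
          Real.exp_neg]
        field_simp
    _ < δ ^ 2 * Real.exp (-(δ * κ)) * (4 * κ * L) := by gcongr
    _ = 4 * (δ * κ * Real.exp (-(δ * κ))) * (δ * L) := by ring
    _ ≤ 4 * (1 - Real.exp (-(δ * κ))) * (Real.exp (δ * L) - 1) := by
      have : 0 ≤ 1 - Real.exp (-(δ * κ)) := le_trans (by positivity) hcontraction
      gcongr

variable [DecidableEq E] [MeasurableSpace E] [DiscreteMeasurableSpace E]
  {Q : Matrix E E ℝ} {μ : ℕ → Measure (ℕ → E)} [∀ k, IsFiniteMeasure (μ k)]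

-- The exponential tilt `(t / k)θ` per step with `θ = 2λε / (b - a)²` minimizes
-- `θ² (b - a)² / (4λ) - θε`, the limiting exponent per unit of time.
lemma eventually_measureReal_mean_sub_ge_le {t ε a b L : ℝ} {g : E → ℝ} (hQ : IsQMatrix Q)
    (hπ : π ∈ stdSimplex ℝ E) (hinv : π ᵥ* Q = 0) (hgap : 0 < spectralGap Q π) (ht : 0 < t)
    (hε : 0 ≤ ε) (hab : a < b) (hg : ∀ i, a ≤ g i ∧ g i ≤ b)
    (hμ : ∀ k, 1 ≤ k → IsMarkovLaw (μ k) π (NormedSpace.exp ((t / k : ℝ) • Q)))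
    (hL : spectralGap Q π * ε ^ 2 / (b - a) ^ 2 < L) :
    ∀ᶠ k : ℕ in atTop,
      (μ k).real {ω | (k : ℝ)⁻¹ * ∑ i ∈ Finset.range k, g (ω i) - π ⬝ᵥ g ≥ ε} ≤
        Real.exp (t * (L - 2 * (spectralGap Q π * ε ^ 2 / (b - a) ^ 2))) := by
  set κ := spectralGap Q π
  set θ := 2 * κ * ε / (b - a) ^ 2
  have hba : 0 < b - a := sub_pos.2 hab
  have hθD : (θ * (b - a)) ^ 2 < 4 * κ * L := by
    calc (θ * (b - a)) ^ 2 = 4 * κ * (κ * ε ^ 2 / (b - a) ^ 2) := by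
          simp only [θ]
          field_simp
          ring
      _ < 4 * κ * L := by gcongr
  have hδ : Tendsto (fun k : ℕ ↦ t / k) atTop (𝓝[>] 0) := tendsto_nhdsWithin_iff.2
    ⟨tendsto_const_div_atTop_nhds_zero_nat t, (eventually_gt_atTop 0).mono fun k hk ↦
      div_pos ht (Nat.cast_pos.2 hk)⟩
  filter_upwards [hδ.eventually (eventually_sq_exp_mul_lt hgap hθD), eventually_gt_atTop 0]
    with k hcond hk
  have hk_pos : (0 : ℝ) < k := Nat.cast_pos.2 hk
  have hδk : 0 < t / k := div_pos ht hk_pos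
  calc _ ≤ (Real.exp (-(t / k * θ * ε)) * Real.exp (t / k * L)) ^ k :=
      (hμ k hk).measureReal_mean_sub_ge_le hπ (hQ.smul hδk.le).exp_mem_rowStochastic
        (vecMul_exp_eq_self (by rw [vecMul_smul, hinv, smul_zero])) (Real.exp_pos _).le
        (Real.exp_lt_one_iff.2 (neg_neg_of_pos (mul_pos hδk hgap)))
        (contractsMeanZero_exp_smul hinv (fun f ↦ spectralGap_mul_le hQ hπ.1 hinv) hδk.le)
        hg (by positivity) (Real.exp_pos _).le (by rwa [mul_assoc (t / k)]) hk.ne'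
    _ = Real.exp (t * (L - 2 * (κ * ε ^ 2 / (b - a) ^ 2))) := by
      rw [← Real.exp_add, ← Real.exp_nat_mul]
      congr 1
      simp only [θ]
      field_simp
      ring

end Asymptotics

end FiniteMarkov

open FiniteMarkov Topology in
theorem finite_ctmc_skeleton_hoeffding_general
    {E : Type*} [Fintype E] [DecidableEq E] [MeasurableSpace E] [DiscreteMeasurableSpace E]
    {Q : Matrix E E ℝ} (hQ : IsQMatrix Q) {π : E → ℝ} (hπ : π ∈ stdSimplex ℝ E)
    (hinv : π ᵥ* Q = 0) {t ε a b : ℝ} (ht : 0 < t) (hε : 0 ≤ ε) (hab : a < b)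
    {g : E → ℝ} (hg : ∀ i, a ≤ g i ∧ g i ≤ b)
    {μ : ℕ → Measure (ℕ → E)} [∀ k, IsProbabilityMeasure (μ k)]
    (hμ : ∀ k, 1 ≤ k → IsMarkovLaw (μ k) π (NormedSpace.exp ((t / k : ℝ) • Q))) :
    limsup (fun k : ℕ ↦
        (μ k).real {ω | (k : ℝ)⁻¹ * ∑ i ∈ Finset.range k, g (ω i) - π ⬝ᵥ g ≥ ε}) atTop ≤
      Real.exp (-(spectralGap Q π * t * ε ^ 2 / (b - a) ^ 2)) := by
  have hlimsup {c : ℝ} (hc : ∀ᶠ k : ℕ in atTop,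
      (μ k).real {ω | (k : ℝ)⁻¹ * ∑ i ∈ Finset.range k, g (ω i) - π ⬝ᵥ g ≥ ε} ≤ c) :=
    limsup_le_of_le (isCoboundedUnder_le_of_le atTop (x := 0) fun _ ↦ measureReal_nonneg) hc
  rcases (spectralGap_nonneg hQ hπ.1 hinv).eq_or_lt with hzero | hgap
  · simpa [← hzero] using hlimsup (.of_forall fun _ ↦ measureReal_le_one)
  set L := spectralGap Q π * ε ^ 2 / (b - a) ^ 2
  have hlim : Tendsto (fun L' ↦ Real.exp (t * (L' - 2 * L))) (𝓝[>] L)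
      (𝓝 (Real.exp (t * (L - 2 * L)))) :=
    ((show Continuous fun L' ↦ Real.exp (t * (L' - 2 * L)) by fun_prop).tendsto L).mono_left
      nhdsWithin_le_nhds
  calc _ ≤ Real.exp (t * (L - 2 * L)) := ge_of_tendsto hlim <|
        eventually_mem_nhdsWithin.mono fun L' hL' ↦
          hlimsup (eventually_measureReal_mean_sub_ge_le hQ hπ hinv hgap ht hε hab hg hμ hL')
    _ = _ := by
      congr 1
      simp only [L]
      ring

/-- Hoeffding's inequality for a finite-state irreducible continuous-time Markov chain,
expressed through its `δ`-skeleton chains: the limsup over `k` of the deviation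
probabilities of the `t/k`-skeleton chains is bounded by `exp(-λ(Q) t ε² /(b-a)²)`. -/
theorem finite_ctmc_skeleton_hoeffding
    {E : Type*} [Fintype E] [DecidableEq E] [Nonempty E]
    [MeasurableSpace E] [DiscreteMeasurableSpace E]
    (Q : Matrix E E ℝ)
    (hQoff : ∀ i j, i ≠ j → 0 ≤ Q i j) (hQrow : ∀ i, ∑ j, Q i j = 0)
    -- irreducibility of the Q-matrix
    (hirr : ∀ i j, i ≠ j → ∃ m, ∃ c : Fin (m + 1) → E,
      c 0 = i ∧ c (Fin.last m) = j ∧ ∀ l : Fin m, 0 < Q (c l.castSucc) (c l.succ))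
    (π : E → ℝ) (hπpos : ∀ i, 0 < π i) (hπ1 : ∑ i, π i = 1)
    (hinv : ∀ j, ∑ i, π i * Q i j = 0)
    (t : ℝ) (ht : 0 < t) (ε : ℝ) (hε : 0 < ε)
    (g : E → ℝ) (a b : ℝ) (hab : a < b) (hg : ∀ i, a ≤ g i ∧ g i ≤ b)
    -- for each `k ≥ 1`, `μ k` is the law of the Markov chain with one-step transition
    -- matrix `P^{t/k} = exp((t/k)Q)` and initial distribution `π`, characterized by its
    -- finite-dimensional (cylinder) distributions
    (μ : ℕ → Measure (ℕ → E)) (hprob : ∀ k, IsProbabilityMeasure (μ k))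
    (hμ : ∀ k, 1 ≤ k → ∀ (m : ℕ) (x : ℕ → E),
      μ k {ω | ∀ l ≤ m, ω l = x l} =
        ENNReal.ofReal (π (x 0) *
          ∏ l ∈ Finset.range m,
            NormedSpace.exp ((t / (k : ℝ)) • Q) (x l) (x (l + 1)))) :
    limsup (fun k : ℕ =>
        (μ k {ω | (k : ℝ)⁻¹ * ∑ i ∈ Finset.range k, g (ω i) - ∑ i, π i * g i ≥ ε}).toReal)
      atTop ≤
      Real.exp (-(sInf {c : ℝ | ∃ f : E → ℝ,
          Real.sqrt (∑ i, π i * f i ^ 2) = 1 ∧ (∑ i, π i * f i) = 0 ∧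
          c = -(∑ i, π i * ((∑ j, Q i j * f j) * f i))} * t * ε ^ 2 / (b - a) ^ 2)) :=
  finite_ctmc_skeleton_hoeffding_general
    ⟨hQoff, funext fun i ↦ by simpa [mulVec, dotProduct] using hQrow i⟩
    ⟨fun i ↦ (hπpos i).le, hπ1⟩ (funext hinv) ht hε.le hab hg hμ
end

section
/- Let E be a finite set with at least two elements and Q an irreducible Q-matrix on E with invariant probability distribution π, π(i) > 0 for all i. Then the spectral gap is strictly positive: λ(Q) := inf{ −⟨Qf,f⟩_π : f : E → ℝ, ‖f‖_π = 1, π(f) = 0 } > 0. -/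
open Matrix

/-!
If `w` is an excessive measure of a sub-Markovian generator `Q`, then expanding the square shows
`∑ i, ∑ j, w i * Q i j * (f j - f i) ^ 2 ≤ -2 ⟨Qf, f⟩_w`. Hence `-⟨Qf, f⟩_w ≤ 0` forces `f` to be
constant along every transition of positive rate. If the transition graph is connected, `f` is then
constant, and so zero as soon as its mean vanishes. Thus `-⟨Qf, f⟩_w` is positive on the compact set
of unit mean-zero functions, hence bounded below there by a positive number.
-/

open Finset Relation

section Relation

variable {α : Type*} {r : α → α → Prop}

theorem reflTransGen_of_fin_chain {m : ℕ} (c : Fin (m + 1) → α)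
    (hc : ∀ l : Fin m, r (c l.castSucc) (c l.succ)) (l : Fin (m + 1)) :
    ReflTransGen r (c 0) (c l) := by
  induction l using Fin.induction with
  | zero => exact .refl
  | succ l ih => exact ih.tail (hc l)

theorem eqvGen_of_forall_ne_exists_fin_chain
    (hr : ∀ i j, i ≠ j → ∃ m, ∃ c : Fin (m + 1) → α,
      c 0 = i ∧ c (Fin.last m) = j ∧ ∀ l : Fin m, r (c l.castSucc) (c l.succ)) (i j : α) :
    EqvGen r i j := by
  obtain rfl | hij := eq_or_ne i j
  · exact .refl i
  · obtain ⟨m, c, rfl, rfl, hc⟩ := hr i j hij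
    exact EqvGen.reflTransGen_le_eqvGen _ _ _ (reflTransGen_of_fin_chain c hc _)

theorem apply_eq_of_eqvGen {β : Type*} {f : α → β} (hf : ∀ i j, r i j → f i = f j) {i j : α}
    (hij : EqvGen r i j) : f i = f j :=
  (Setoid.ker f).iseqv.eqvGen_iff.1 (EqvGen.mono hf i j hij)

end Relation

section DirichletForm

variable {E R : Type*} [Fintype E] [CommRing R]

/-- The quadratic form `f ↦ -⟨Qf, f⟩_w` of a matrix `Q` with respect to the weights `w`. It is
defined for arbitrary `Q`, symmetric or not. -/
def dirichletForm (Q : Matrix E E R) (w f : E → R) : R :=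
  -(∑ i, w i * ((∑ j, Q i j * f j) * f i))

theorem sum_mul_sub_sq_eq_dirichletForm (Q : Matrix E E R) (w f : E → R) :
    ∑ i, ∑ j, w i * Q i j * (f j - f i) ^ 2 =
      2 * dirichletForm Q w f + ∑ i, (w i * ∑ j, Q i j) * f i ^ 2 +
        ∑ j, (∑ i, w i * Q i j) * f j ^ 2 := by
  have expand : ∀ i j, w i * Q i j * (f j - f i) ^ 2 =
      -2 * (w i * (Q i j * f j * f i)) + w i * Q i j * f i ^ 2 + w i * Q i j * f j ^ 2 :=
    fun i j => by ring
  have columns : ∑ j, (∑ i, w i * Q i j) * f j ^ 2 = ∑ i, ∑ j, w i * Q i j * f j ^ 2 := by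
    simp only [sum_mul]
    exact sum_comm
  rw [columns]
  simp only [expand, dirichletForm, sum_add_distrib, mul_sum, sum_mul, ← sum_neg_distrib,
    neg_mul, mul_neg]

variable [LinearOrder R] [IsStrictOrderedRing R] {Q : Matrix E E R} {w f : E → R}

theorem sum_mul_sq_pos (hw : ∀ i, 0 < w i) (hf : f ≠ 0) : 0 < ∑ i, w i * f i ^ 2 := by
  obtain ⟨i, hi⟩ := Function.ne_iff.1 hf
  exact sum_pos' (fun j _ => mul_nonneg (hw j).le (sq_nonneg _))
    ⟨i, mem_univ i, mul_pos (hw i) (sq_pos_of_ne_zero hi)⟩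

theorem sum_mul_sub_sq_le_two_mul_dirichletForm (hrow : ∀ i, ∑ j, Q i j ≤ 0)
    (hw : ∀ i, 0 ≤ w i) (hcol : ∀ j, ∑ i, w i * Q i j ≤ 0) :
    ∑ i, ∑ j, w i * Q i j * (f j - f i) ^ 2 ≤ 2 * dirichletForm Q w f := by
  have rows : ∑ i, (w i * ∑ j, Q i j) * f i ^ 2 ≤ 0 := sum_nonpos fun i _ =>
    mul_nonpos_of_nonpos_of_nonneg (mul_nonpos_of_nonneg_of_nonpos (hw i) (hrow i)) (sq_nonneg _)
  have columns : ∑ j, (∑ i, w i * Q i j) * f j ^ 2 ≤ 0 := sum_nonpos fun j _ =>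
    mul_nonpos_of_nonpos_of_nonneg (hcol j) (sq_nonneg _)
  rw [sum_mul_sub_sq_eq_dirichletForm]
  linarith

theorem mul_sub_sq_le_two_mul_dirichletForm (hoff : ∀ i j, i ≠ j → 0 ≤ Q i j)
    (hrow : ∀ i, ∑ j, Q i j ≤ 0) (hw : ∀ i, 0 ≤ w i) (hcol : ∀ j, ∑ i, w i * Q i j ≤ 0) (i j : E) :
    w i * Q i j * (f j - f i) ^ 2 ≤ 2 * dirichletForm Q w f := by
  have term_nonneg : ∀ i j, 0 ≤ w i * Q i j * (f j - f i) ^ 2 := fun i j => by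
    obtain rfl | hij := eq_or_ne i j
    · simp
    · exact mul_nonneg (mul_nonneg (hw i) (hoff i j hij)) (sq_nonneg _)
  calc w i * Q i j * (f j - f i) ^ 2
      ≤ ∑ j, w i * Q i j * (f j - f i) ^ 2 :=
        single_le_sum (f := fun j => w i * Q i j * (f j - f i) ^ 2)
          (fun j _ => term_nonneg i j) (mem_univ j)
    _ ≤ ∑ i, ∑ j, w i * Q i j * (f j - f i) ^ 2 :=
        single_le_sum (f := fun i => ∑ j, w i * Q i j * (f j - f i) ^ 2)
          (fun i _ => sum_nonneg fun j _ => term_nonneg i j) (mem_univ i)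
    _ ≤ 2 * dirichletForm Q w f := sum_mul_sub_sq_le_two_mul_dirichletForm hrow hw hcol

theorem apply_eq_of_dirichletForm_nonpos (hoff : ∀ i j, i ≠ j → 0 ≤ Q i j)
    (hrow : ∀ i, ∑ j, Q i j ≤ 0) (hw : ∀ i, 0 < w i) (hcol : ∀ j, ∑ i, w i * Q i j ≤ 0)
    (hf : dirichletForm Q w f ≤ 0) {i j : E} (hij : 0 < Q i j) : f i = f j := by
  by_contra hne
  have term_pos : 0 < w i * Q i j * (f j - f i) ^ 2 :=
    mul_pos (mul_pos (hw i) hij) (sq_pos_of_ne_zero (sub_ne_zero.2 (Ne.symm hne)))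
  have term_le := mul_sub_sq_le_two_mul_dirichletForm (f := f) hoff hrow
    (fun i => (hw i).le) hcol i j
  linarith

theorem dirichletForm_pos (hoff : ∀ i j, i ≠ j → 0 ≤ Q i j) (hrow : ∀ i, ∑ j, Q i j ≤ 0)
    (hconn : ∀ i j, EqvGen (fun i j => 0 < Q i j) i j) (hw : ∀ i, 0 < w i)
    (hcol : ∀ j, ∑ i, w i * Q i j ≤ 0) (hf : f ≠ 0) (hmean : ∑ i, w i * f i = 0) :
    0 < dirichletForm Q w f := by
  by_contra! hnonpos
  obtain ⟨i, hi⟩ := Function.ne_iff.1 hf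
  have edge : ∀ j k, 0 < Q j k → f j = f k := fun _ _ =>
    apply_eq_of_dirichletForm_nonpos hoff hrow hw hcol hnonpos
  have const : ∀ j, f j = f i := fun j => apply_eq_of_eqvGen edge (hconn j i)
  have mass_pos : 0 < ∑ j, w j := sum_pos (fun j _ => hw j) ⟨i, mem_univ i⟩
  simp only [const, ← sum_mul] at hmean
  exact (mul_ne_zero mass_pos.ne' hi) hmean

end DirichletForm

theorem exists_ne_zero_sum_mul_eq_zero {E K : Type*} [Fintype E] [Nontrivial E] [Field K]
    (w : E → K) : ∃ f : E → K, f ≠ 0 ∧ ∑ i, w i * f i = 0 := by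
  have hker : LinearMap.ker (dotProductBilin K K w) ≠ ⊥ := LinearMap.ker_ne_bot_of_finrank_lt <| by
    simpa only [Module.finrank_self, Module.finrank_fintype_fun_eq_card] using
      Fintype.one_lt_card (α := E)
  obtain ⟨f, hf, hne⟩ := Submodule.exists_mem_ne_zero_of_ne_bot hker
  exact ⟨f, hne, hf⟩

section UnitMeanZero

variable {E : Type*} [Fintype E] {w : E → ℝ}

theorem isCompact_setOf_sum_mul_sq_le (hw : ∀ i, 0 < w i) (r : ℝ) :
    IsCompact {f : E → ℝ | ∑ i, w i * f i ^ 2 ≤ r} := by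
  have box_compact : IsCompact (Set.univ.pi fun i => Set.Icc (-√(r / w i)) √(r / w i)) :=
    isCompact_univ_pi fun _ => isCompact_Icc
  refine box_compact.of_isClosed_subset (isClosed_le (by fun_prop) continuous_const)
    fun f hf i _ => ?_
  have term_le : w i * f i ^ 2 ≤ r :=
    (single_le_sum (f := fun i => w i * f i ^ 2)
      (fun j _ => mul_nonneg (hw j).le (sq_nonneg _)) (mem_univ i)).trans hf
  exact abs_le.1 (Real.abs_le_sqrt ((le_div_iff₀' (hw i)).2 term_le))

/-- The functions of unit norm and zero mean in `L²(w)`, over which the spectral gap is an infimum.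
The norm is encoded through its square. -/
def unitMeanZero (w : E → ℝ) : Set (E → ℝ) :=
  {f | ∑ i, w i * f i ^ 2 = 1 ∧ ∑ i, w i * f i = 0}

theorem ne_zero_of_mem_unitMeanZero {f : E → ℝ} (hf : f ∈ unitMeanZero w) : f ≠ 0 := by
  rintro rfl
  simp [unitMeanZero] at hf

theorem isCompact_unitMeanZero (hw : ∀ i, 0 < w i) : IsCompact (unitMeanZero w) :=
  (isCompact_setOf_sum_mul_sq_le hw 1).of_isClosed_subset
    ((isClosed_eq (by fun_prop) continuous_const).inter
      (isClosed_eq (by fun_prop) continuous_const))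
    fun _ hf => hf.1.le

theorem unitMeanZero_nonempty [Nontrivial E] (hw : ∀ i, 0 < w i) : (unitMeanZero w).Nonempty := by
  obtain ⟨g, hg, hmean⟩ := exists_ne_zero_sum_mul_eq_zero w
  have normSq_pos := sum_mul_sq_pos hw hg
  refine ⟨fun i => g i / √(∑ j, w j * g j ^ 2), ?_, ?_⟩
  · simp only [div_pow, Real.sq_sqrt normSq_pos.le, ← mul_div_assoc, ← sum_div]
    exact div_self normSq_pos.ne'
  · simp only [← mul_div_assoc, ← sum_div, hmean, zero_div]

end UnitMeanZero

theorem exists_pos_forall_le_dirichletForm {E : Type*} [Fintype E] {Q : Matrix E E ℝ}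
    (hoff : ∀ i j, i ≠ j → 0 ≤ Q i j) (hrow : ∀ i, ∑ j, Q i j ≤ 0)
    (hconn : ∀ i j, EqvGen (fun i j => 0 < Q i j) i j) {w : E → ℝ} (hw : ∀ i, 0 < w i)
    (hcol : ∀ j, ∑ i, w i * Q i j ≤ 0) :
    ∃ ε, 0 < ε ∧ ∀ f ∈ unitMeanZero w, ε ≤ dirichletForm Q w f := by
  have hcont : Continuous (dirichletForm Q w) := by
    unfold dirichletForm
    fun_prop
  exact (isCompact_unitMeanZero hw).exists_forall_le' hcont.continuousOn fun f hf =>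
    dirichletForm_pos hoff hrow hconn hw hcol (ne_zero_of_mem_unitMeanZero hf) hf.2

theorem finite_spectral_gap_pos_general {E : Type*} [Fintype E] [Nontrivial E] (Q : Matrix E E ℝ)
    (hoff : ∀ i j, i ≠ j → 0 ≤ Q i j) (hrow : ∀ i, ∑ j, Q i j ≤ 0)
    (hconn : ∀ i j, EqvGen (fun i j => 0 < Q i j) i j) (w : E → ℝ) (hw : ∀ i, 0 < w i)
    (hcol : ∀ j, ∑ i, w i * Q i j ≤ 0) :
    0 < sInf {c : ℝ | ∃ f : E → ℝ,
        Real.sqrt (∑ i, w i * f i ^ 2) = 1 ∧ (∑ i, w i * f i) = 0 ∧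
        c = -(∑ i, w i * ((∑ j, Q i j * f j) * f i))} := by
  obtain ⟨ε, hε, hle⟩ := exists_pos_forall_le_dirichletForm hoff hrow hconn hw hcol
  obtain ⟨g, hnorm, hmean⟩ := unitMeanZero_nonempty hw
  refine hε.trans_le (le_csInf ⟨_, g, Real.sqrt_eq_one.2 hnorm, hmean, rfl⟩ ?_)
  rintro _ ⟨f, hnorm, hmean, rfl⟩
  exact hle f ⟨Real.sqrt_eq_one.1 hnorm, hmean⟩

/-- For a finite state space with at least two elements and an irreducible Q-matrix `Q`
with invariant probability distribution `π` (with `π i > 0`), the `L²(π)`-spectral gap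
`λ(Q) = inf { -⟨Qf,f⟩_π : ‖f‖_π = 1, π(f) = 0 }` is strictly positive. -/
theorem finite_spectral_gap_pos
    {E : Type*} [Fintype E] [DecidableEq E] [Nontrivial E]
    (Q : Matrix E E ℝ)
    (hQoff : ∀ i j, i ≠ j → 0 ≤ Q i j) (hQrow : ∀ i, ∑ j, Q i j = 0)
    (hirr : ∀ i j, i ≠ j → ∃ m, ∃ c : Fin (m + 1) → E,
      c 0 = i ∧ c (Fin.last m) = j ∧ ∀ l : Fin m, 0 < Q (c l.castSucc) (c l.succ))
    (π : E → ℝ) (hπpos : ∀ i, 0 < π i) (hπ1 : ∑ i, π i = 1)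
    (hinv : ∀ j, ∑ i, π i * Q i j = 0) :
    0 < sInf {c : ℝ | ∃ f : E → ℝ,
        Real.sqrt (∑ i, π i * f i ^ 2) = 1 ∧ (∑ i, π i * f i) = 0 ∧
        c = -(∑ i, π i * ((∑ j, Q i j * f j) * f i))} :=
  finite_spectral_gap_pos_general Q hQoff (fun i => (hQrow i).le)
    (eqvGen_of_forall_ne_exists_fin_chain hirr) π hπpos fun j => (hinv j).le
end

section
/- Let E be a countably infinite set, Q a Q-matrix on E with q(i) := −Q(i,i) < ∞ for all i, and π an invariant probability distribution for Q with π(i) > 0 for all i and ∑_{i∈E} π(i)Q(i,j) = 0 (the off-diagonal part converging absolutely) for every j. Let F ⊂ E be a finite nonempty subset with π(F^C) > 0, let e denote a new single-point state representing F^C, and define the collapsed matrix Q̃ on F ∪ {e} by: Q̃(i,j) = Q(i,j) for i,j ∈ F; Q̃(i,e) = ∑_{k∈F^C} Q(i,k) for i ∈ F; Q̃(e,i) = (∑_{k∈F^C} π(k)Q(k,i)) / (∑_{k∈F^C} π(k)) for i ∈ F; and Q̃(e,e) = −∑_{k∈F} Q̃(e,k). Define π̃ on F ∪ {e} by π̃(i)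 = π(i) for i ∈ F and π̃(e) = ∑_{k∈F^C} π(k). Then Q̃ is a Q-matrix on the finite set F ∪ {e} and π̃ is invariant for Q̃: ∑_{x∈F∪{e}} π̃(x)Q̃(x,y) = 0 for every y ∈ F ∪ {e}. -/
/-- The collapsed Q-matrix on `F ∪ {e}` obtained from a Q-matrix `Q` on `E` with
invariant distribution `π` by collapsing the complement `F^C` to the single state
`e = none`. -/
noncomputable def collapsedQ {E : Type*} (Q : E → E → ℝ) (π : E → ℝ) (F : Finset E) :
    Option {i // i ∈ F} → Option {i // i ∈ F} → ℝ
  | some i, some j => Q i j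
  | some i, none => ∑' k : {k : E // k ∉ F}, Q i k
  | none, some j =>
      (∑' k : {k : E // k ∉ F}, π k * Q k j) / ∑' k : {k : E // k ∉ F}, π k
  | none, none =>
      -∑ j : {i // i ∈ F},
        (∑' k : {k : E // k ∉ F}, π (k : E) * Q k j) / ∑' k : {k : E // k ∉ F}, π k

/-- The collapsed distribution on `F ∪ {e}`. -/
noncomputable def collapsedPi {E : Type*} (π : E → ℝ) (F : Finset E) :
    Option {i // i ∈ F} → ℝ
  | some i => π i
  | none => ∑' k : {k : E // k ∉ F}, π k

/-!
Since the row sums of `Q` and the sums `∑ i, π i * Q i j` vanish, each sum over the complement of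
`F` is minus the corresponding sum over `F`. For rows this says that `Q̃` has zero row sums. For
columns it gives balance at every `j ∈ F`, because `π̃ e * Q̃ e j` is by construction the total
flow from the complement of `F` into `j`. Balance at `e` then comes for free: as the rows of `Q̃`
sum to zero, the balances at all states of `F ∪ {e}` add up to zero.
-/

theorem tsum_notMem_eq_neg_sum {ι M : Type*} [AddCommGroup M] [TopologicalSpace M]
    [IsTopologicalAddGroup M] [T2Space M] {f : ι → M} (hf : HasSum f 0) (s : Finset ι) :
    ∑' k : {k // k ∉ s}, f k = -∑ i : {i // i ∈ s}, f i := by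
  refine (s.hasSum_compl_iff.2 ?_).tsum_eq
  rwa [Finset.sum_coe_sort s f, neg_add_cancel]

theorem sum_mul_eq_zero_of_forall_ne {ι κ R : Type*} [Fintype ι] [Fintype κ]
    [NonUnitalNonAssocSemiring R] {A : ι → κ → R} {v : ι → R} {e : κ}
    (hrow : ∀ x, ∑ y, A x y = 0) (hcol : ∀ y ≠ e, ∑ x, v x * A x y = 0) :
    ∑ x, v x * A x e = 0 :=
  calc ∑ x, v x * A x e
    _ = ∑ y, ∑ x, v x * A x y := (Fintype.sum_eq_single e hcol).symm
    _ = ∑ x, v x * ∑ y, A x y := by simp only [Finset.mul_sum]; exact Finset.sum_comm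
    _ = 0 := by simp only [hrow, mul_zero, Finset.sum_const_zero]

section Collapse

variable {E : Type*} {Q : E → E → ℝ} {π : E → ℝ} {F : Finset E}

theorem collapsedQ_nonneg_of_ne (hQ : ∀ i j, i ≠ j → 0 ≤ Q i j) (hπ : ∀ k ∉ F, 0 ≤ π k) :
    ∀ {x y}, x ≠ y → 0 ≤ collapsedQ Q π F x y
  | some i, some j, hxy => hQ i j fun h => hxy (congrArg some (Subtype.ext h))
  | some i, none, _ => tsum_nonneg fun k => hQ i k (ne_of_mem_of_not_mem i.2 k.2)
  | none, some j, _ =>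
    div_nonneg
      (tsum_nonneg fun k => mul_nonneg (hπ k k.2) (hQ k j (ne_of_mem_of_not_mem j.2 k.2).symm))
      (tsum_nonneg fun k => hπ k k.2)
  | none, none, hxy => absurd rfl hxy

theorem sum_collapsedQ_eq_zero (hQ : ∀ i ∈ F, HasSum (Q i) 0) (x : Option {i // i ∈ F}) :
    ∑ y, collapsedQ Q π F x y = 0 := by
  rw [Fintype.sum_option]
  cases x with
  | none => exact neg_add_cancel _
  | some i =>
    simp only [collapsedQ, tsum_notMem_eq_neg_sum (hQ i i.2), neg_add_cancel]

theorem collapsedPi_none_mul_collapsedQ_some (hFc : ∑' k : {k // k ∉ F}, π k ≠ 0)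
    (j : {i // i ∈ F}) :
    collapsedPi π F none * collapsedQ Q π F none (some j) = ∑' k : {k // k ∉ F}, π k * Q k j :=
  mul_div_cancel₀ _ hFc

theorem sum_collapsedPi_mul_collapsedQ_some_eq_zero (hFc : ∑' k : {k // k ∉ F}, π k ≠ 0)
    {j : {i // i ∈ F}} (hj : HasSum (fun i => π i * Q i j) 0) :
    ∑ x, collapsedPi π F x * collapsedQ Q π F x (some j) = 0 := by
  rw [Fintype.sum_option, collapsedPi_none_mul_collapsedQ_some hFc,
    tsum_notMem_eq_neg_sum hj]
  exact neg_add_cancel _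

theorem sum_collapsedPi_mul_collapsedQ_eq_zero (hFc : ∑' k : {k // k ∉ F}, π k ≠ 0)
    (hQ : ∀ i ∈ F, HasSum (Q i) 0) (hπ : ∀ j ∈ F, HasSum (fun i => π i * Q i j) 0) :
    ∀ y, ∑ x, collapsedPi π F x * collapsedQ Q π F x y = 0
  | some j => sum_collapsedPi_mul_collapsedQ_some_eq_zero hFc (hπ j j.2)
  | none => sum_mul_eq_zero_of_forall_ne (sum_collapsedQ_eq_zero hQ) fun
    | some j, _ => sum_collapsedPi_mul_collapsedQ_some_eq_zero hFc (hπ j j.2)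
    | none, h => absurd rfl h

end Collapse

theorem collapsed_Qmatrix_invariant_general {E : Type*} {Q : E → E → ℝ} {π : E → ℝ}
    {F : Finset E} (hQoff : ∀ i j, i ≠ j → 0 ≤ Q i j) (hQrow : ∀ i ∈ F, HasSum (Q i) 0)
    (hπ : ∀ k ∉ F, 0 ≤ π k) (hinv : ∀ j ∈ F, HasSum (fun i => π i * Q i j) 0)
    (hFc : ∑' k : {k // k ∉ F}, π k ≠ 0) :
    (∀ x y, x ≠ y → 0 ≤ collapsedQ Q π F x y) ∧
    (∀ x, ∑ y, collapsedQ Q π F x y = 0) ∧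
    (∀ y, ∑ x, collapsedPi π F x * collapsedQ Q π F x y = 0) :=
  ⟨fun _ _ => collapsedQ_nonneg_of_ne hQoff hπ, sum_collapsedQ_eq_zero hQrow,
    sum_collapsedPi_mul_collapsedQ_eq_zero hFc hQrow hinv⟩

/-- The collapsed matrix `Q̃` is a Q-matrix on the finite set `F ∪ {e}` and the collapsed
distribution `π̃` is invariant for `Q̃`. -/
theorem collapsed_Qmatrix_invariant
    {E : Type*} [Countable E] [Infinite E] [DecidableEq E]
    (Q : E → E → ℝ)
    (hQoff : ∀ i j, i ≠ j → 0 ≤ Q i j)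
    (hQsumm : ∀ i, Summable (Q i)) (hQrow : ∀ i, ∑' j, Q i j = 0)
    (π : E → ℝ) (hπpos : ∀ i, 0 < π i) (hπsumm : Summable π) (hπ1 : ∑' i, π i = 1)
    (hinvsumm : ∀ j, Summable fun i => π i * Q i j)
    (hinv : ∀ j, ∑' i, π i * Q i j = 0)
    (F : Finset E) (hF : F.Nonempty) (hFc : 0 < ∑' k : {k : E // k ∉ F}, π k) :
    (∀ x y, x ≠ y → 0 ≤ collapsedQ Q π F x y) ∧
    (∀ x, ∑ y, collapsedQ Q π F x y = 0) ∧
    (∀ y, ∑ x, collapsedPi π F x * collapsedQ Q π F x y = 0) :=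
  collapsed_Qmatrix_invariant_general hQoff (fun i _ => hQrow i ▸ (hQsumm i).hasSum)
    (fun k _ => (hπpos k).le) (fun j _ => hinv j ▸ (hinvsumm j).hasSum) hFc.ne'
end

section
/- Let E be a countably infinite set, Q a Q-matrix on E with q(i) := −Q(i,i) < ∞, and π an invariant probability distribution for Q with π(i) > 0 for all i. Let F ⊂ E be a finite nonempty subset with π(F^C) > 0, and let Q̃, π̃ on the finite set F ∪ {e} be the collapsed matrix and collapsed distribution associated with F. Define the Dirichlet forms D*(f) := (1/2)∑_{i,j∈E} π(i)Q(i,j)(f(j)−f(i))² for f : E → ℝ, and D̃*(g) := (1/2)∑_{x,y∈F∪{e}} π̃(x)Q̃(x,y)(g(y)−g(x))² for g : F ∪ {e} → ℝ. Let f : E → ℝ be constant, equal to d, on F^C, and let f̃ : F ∪ {e} → ℝ be given by f̃(i) = f(i) for i ∈ F and f̃(e) = d. Then: (i) D*(f) = D̃*(f̃); (ii) π(f) = π̃(f̃) and ‖f‖_π = ‖f̃‖_{π̃}; in particular π(f) = 0 and ‖f‖_π = 1 hold if and only if π̃(f̃) = 0 and ‖f̃‖_{π̃} = 1. -/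
/-- The collapsed function on `F ∪ {e}` associated with a function `f` on `E` which is
constant equal to `d` on `F^C`. -/
def collapsedFun {E : Type*} (f : E → ℝ) (d : ℝ) (F : Finset E) :
    Option {i // i ∈ F} → ℝ
  | some i => f i
  | none => d

/-!
Two states outside `F` do not contribute to the Dirichlet form, since `f` takes the same value at
both. The double sum over `E × E` therefore reduces to the finitely many rows indexed by `F` and
the finitely many columns indexed by `F`, the latter restricted to rows outside `F`. Each row is the
mean of a function which is constant off `F` with respect to the weight `Q i`, and collapsing
preserves such means; the columns sum to the flow from `e` into `F`.
-/

section FinsetRows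

variable {α β M : Type*} [AddCommMonoid M] [TopologicalSpace M] [ContinuousAdd M] {g : α × β → M}

theorem hasSum_prod_of_finset_rows {s : Finset α} {r : {i // i ∈ s} → M}
    (hr : ∀ i : {i // i ∈ s}, HasSum (fun j => g (i, j)) (r i))
    (h0 : ∀ i ∉ s, ∀ j, g (i, j) = 0) :
    HasSum g (∑ i, r i) := by
  classical
  have single_row (i : {i // i ∈ s}) :
      HasSum (fun p : α × β => if (i : α) = p.1 then g p else 0) (r i) := by
    refine ((Prod.mk_right_injective (i : α)).hasSum_iff ?_).1
      (by simpa [Function.comp_def] using hr i)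
    rintro ⟨k, j⟩ hp
    exact if_neg fun hk => hp ⟨j, by rw [hk]⟩
  convert hasSum_sum fun i (_ : i ∈ Finset.univ) => single_row i with p
  rw [Finset.sum_coe_sort s fun i => if i = p.1 then g p else 0, Finset.sum_ite_eq']
  exact (ite_eq_left_iff.2 fun hp => (h0 p.1 hp p.2).symm).symm

theorem hasSum_prod_of_finset_rows_add_finset_columns {s : Finset α} {t : Finset β}
    {r : {i // i ∈ s} → M} {c : {j // j ∈ t} → M}
    (hr : ∀ i : {i // i ∈ s}, HasSum (fun j => g (i, j)) (r i))
    (hc : ∀ j : {j // j ∈ t}, HasSum (fun i : {i // i ∉ s} => g (i, j)) (c j))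
    (h0 : ∀ i ∉ s, ∀ j ∉ t, g (i, j) = 0) :
    HasSum g (∑ i, r i + ∑ j, c j) := by
  classical
  have rows : HasSum (fun p : α × β => if p.1 ∈ s then g p else 0) (∑ i, r i) :=
    hasSum_prod_of_finset_rows (fun i => by simpa using hr i) fun i hi j => if_neg hi
  have columns : HasSum (fun p : β × α => if p.2 ∈ s then 0 else g p.swap) (∑ j, c j) := by
    refine hasSum_prod_of_finset_rows (fun j => ?_) fun j hj i => ?_
    · have restrict : (fun i : {i // i ∉ s} => g (i, j)) =
          (fun i => if i ∈ s then 0 else g (i, j)) ∘ Subtype.val :=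
        funext fun i => (if_neg i.2).symm
      refine (Subtype.val_injective.hasSum_iff fun i hi => if_pos ?_).1 (restrict ▸ hc j)
      simpa using hi
    · exact ite_eq_left_iff.2 fun hi => h0 i hi j hj
  convert rows.add ((Equiv.prodComm α β).hasSum_iff.2 columns) with p
  by_cases hp : p.1 ∈ s <;> simp [hp]

end FinsetRows

theorem hasSum_subtype_mul_of_forall_eq {α R : Type*} [NonUnitalNonAssocSemiring R]
    [TopologicalSpace R] [IsTopologicalSemiring R] {p : α → Prop} {w g : α → R} {c : R}
    (hw : Summable fun k : Subtype p => w k) (hg : ∀ i, p i → g i = c) :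
    HasSum (fun k : Subtype p => w k * g k) ((∑' k : Subtype p, w k) * c) := by
  simpa only [hg _ (Subtype.prop _)] using hw.hasSum.mul_right c

section Collapse

variable {E : Type*} {Q : E → E → ℝ} {π : E → ℝ} {F : Finset E} {f : E → ℝ} {d : ℝ}

theorem collapsedQ_some (i : {i // i ∈ F}) :
    collapsedQ Q π F (some i) = collapsedPi (Q i) F := by
  funext y
  cases y <;> rfl

theorem collapsedPi_none_mul_collapsedQ_none_some (hFc : ∑' k : {k : E // k ∉ F}, π k ≠ 0)
    (j : {j // j ∈ F}) :
    collapsedPi π F none * collapsedQ Q π F none (some j) =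
      ∑' k : {k : E // k ∉ F}, π k * Q k j :=
  mul_div_cancel₀ _ hFc

theorem hasSum_mul_comp_collapsedFun (hπ : Summable π) (hf : ∀ i ∉ F, f i = d) (φ : ℝ → ℝ) :
    HasSum (fun i => π i * φ (f i)) (∑ x, collapsedPi π F x * φ (collapsedFun f d F x)) := by
  have compl : HasSum (fun k : {k : E // k ∉ F} => π k * φ (f k)) (collapsedPi π F none * φ d) :=
    hasSum_subtype_mul_of_forall_eq (g := fun i => φ (f i)) (hπ.subtype _)
      fun i hi => congrArg φ (hf i hi)
  rw [Fintype.sum_option]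
  simpa only [collapsedPi, collapsedFun, Finset.sum_coe_sort F fun i => π i * φ (f i)] using
    F.hasSum_compl_iff.1 compl

theorem hasSum_mul_comp_collapsedFun_collapsedFun
    (hQ : ∀ i ∈ F, Summable (Q i)) (hπQ : ∀ j ∈ F, Summable fun i => π i * Q i j)
    (hFc : ∑' k : {k : E // k ∉ F}, π k ≠ 0) (hf : ∀ i ∉ F, f i = d)
    {φ : ℝ → ℝ → ℝ} (hφ : φ d d = 0) :
    HasSum (fun p : E × E => π p.1 * Q p.1 p.2 * φ (f p.1) (f p.2))
      (∑ x, ∑ y, collapsedPi π F x * collapsedQ Q π F x y *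
        φ (collapsedFun f d F x) (collapsedFun f d F y)) := by
  have row (i : {i // i ∈ F}) : HasSum (fun j => π i * Q i j * φ (f i) (f j))
      (∑ y, π i * collapsedQ Q π F (some i) y * φ (f i) (collapsedFun f d F y)) := by
    simpa only [collapsedQ_some, Finset.mul_sum, mul_assoc] using
      (hasSum_mul_comp_collapsedFun (hQ i i.2) hf (φ (f i))).mul_left (π i)
  have column (j : {j // j ∈ F}) :
      HasSum (fun k : {k : E // k ∉ F} => π k * Q k j * φ (f k) (f j))
        (collapsedPi π F none * collapsedQ Q π F none (some j) * φ d (f j)) := by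
    rw [collapsedPi_none_mul_collapsedQ_none_some hFc]
    exact hasSum_subtype_mul_of_forall_eq (w := fun k => π k * Q k j)
      (g := fun k => φ (f k) (f j)) ((hπQ j j.2).subtype _) fun k hk => by rw [hf k hk]
  have compl (i : E) (hi : i ∉ F) (j : E) (hj : j ∉ F) :
      π i * Q i j * φ (f i) (f j) = 0 := by
    rw [hf i hi, hf j hj, hφ, mul_zero]
  have none_row : ∑ y, collapsedPi π F none * collapsedQ Q π F none y *
        φ d (collapsedFun f d F y) =
      ∑ j, collapsedPi π F none * collapsedQ Q π F none (some j) * φ d (f j) := by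
    simp only [Fintype.sum_option, collapsedFun, hφ, mul_zero, zero_add]
  rw [Fintype.sum_option, add_comm]
  exact none_row ▸ hasSum_prod_of_finset_rows_add_finset_columns row column compl

end Collapse

theorem collapsed_dirichlet_form_eq_general
    {E : Type*} (Q : E → E → ℝ) (π : E → ℝ) (F : Finset E)
    (hQsumm : ∀ i ∈ F, Summable (Q i)) (hπsumm : Summable π)
    (hπQsumm : ∀ j ∈ F, Summable fun i => π i * Q i j)
    (hFc : ∑' k : {k : E // k ∉ F}, π k ≠ 0)
    (d : ℝ) (f : E → ℝ) (hf : ∀ i ∉ F, f i = d) :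
    ((1 / 2) * ∑' p : E × E, π p.1 * Q p.1 p.2 * (f p.2 - f p.1) ^ 2 =
      (1 / 2) * ∑ x, ∑ y,
        collapsedPi π F x * collapsedQ Q π F x y *
          (collapsedFun f d F y - collapsedFun f d F x) ^ 2) ∧
    ((∑' i, π i * f i) = ∑ x, collapsedPi π F x * collapsedFun f d F x) ∧
    (Real.sqrt (∑' i, π i * f i ^ 2) =
      Real.sqrt (∑ x, collapsedPi π F x * collapsedFun f d F x ^ 2)) ∧
    (((∑' i, π i * f i) = 0 ∧ Real.sqrt (∑' i, π i * f i ^ 2) = 1) ↔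
      ((∑ x, collapsedPi π F x * collapsedFun f d F x) = 0 ∧
        Real.sqrt (∑ x, collapsedPi π F x * collapsedFun f d F x ^ 2) = 1)) := by
  have dirichlet := hasSum_mul_comp_collapsedFun_collapsedFun hQsumm hπQsumm hFc hf
    (φ := fun a b => (b - a) ^ 2) (by simp)
  have mean := hasSum_mul_comp_collapsedFun hπsumm hf id
  have sq_norm := hasSum_mul_comp_collapsedFun hπsumm hf (· ^ 2)
  simp only [id] at mean
  rw [dirichlet.tsum_eq, mean.tsum_eq, sq_norm.tsum_eq]
  exact ⟨rfl, rfl, rfl, Iff.rfl⟩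

/-- For a function `f` constant on `F^C`, the Dirichlet form, the mean and the `L²`-norm
are preserved by collapsing: `D*(f) = D̃*(f̃)`, `π(f) = π̃(f̃)` and `‖f‖_π = ‖f̃‖_π̃`;
in particular `π(f) = 0, ‖f‖_π = 1` holds iff `π̃(f̃) = 0, ‖f̃‖_π̃ = 1`. -/
theorem collapsed_dirichlet_form_eq
    {E : Type*} [Countable E] [Infinite E] [DecidableEq E]
    (Q : E → E → ℝ)
    (hQoff : ∀ i j, i ≠ j → 0 ≤ Q i j)
    (hQsumm : ∀ i, Summable (Q i)) (hQrow : ∀ i, ∑' j, Q i j = 0)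
    (π : E → ℝ) (hπpos : ∀ i, 0 < π i) (hπsumm : Summable π) (hπ1 : ∑' i, π i = 1)
    (hinvsumm : ∀ j, Summable fun i => π i * Q i j)
    (hinv : ∀ j, ∑' i, π i * Q i j = 0)
    (F : Finset E) (hF : F.Nonempty) (hFc : 0 < ∑' k : {k : E // k ∉ F}, π k)
    (d : ℝ) (f : E → ℝ) (hf : ∀ i ∉ F, f i = d) :
    -- (i) the Dirichlet forms agree
    ((1 / 2) * ∑' p : E × E, π p.1 * Q p.1 p.2 * (f p.2 - f p.1) ^ 2 =
      (1 / 2) * ∑ x, ∑ y,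
        collapsedPi π F x * collapsedQ Q π F x y *
          (collapsedFun f d F y - collapsedFun f d F x) ^ 2) ∧
    -- (ii) means and norms agree
    ((∑' i, π i * f i) = ∑ x, collapsedPi π F x * collapsedFun f d F x) ∧
    (Real.sqrt (∑' i, π i * f i ^ 2) =
      Real.sqrt (∑ x, collapsedPi π F x * collapsedFun f d F x ^ 2)) ∧
    (((∑' i, π i * f i) = 0 ∧ Real.sqrt (∑' i, π i * f i ^ 2) = 1) ↔
      ((∑ x, collapsedPi π F x * collapsedFun f d F x) = 0 ∧
        Real.sqrt (∑ x, collapsedPi π F x * collapsedFun f d F x ^ 2) = 1)) :=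
  collapsed_dirichlet_form_eq_general Q π F (fun i _ => hQsumm i) hπsumm
    (fun j _ => hinvsumm j) hFc.ne' d f hf
end
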